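/- For any constants 0 < σ ≪ δ there exists n₀ ∈ ℕ such that for all integers n ≥ n₀ divisible by 3 the following holds. Let H be a (1,3)-partite 4-graph with partition classes Q and P, |P| = n and |Q| = n/3, such that every vertex of Q is adjacent to every vertex of P. If for any u ∈ Q and v, v′ ∈ P with deg({u,v,v′}) > 0 we have deg({u,v}) + deg({u,v′}) ≥ (2/3 + δ/2)n², then H has a matching covering all but at most σn vertices of H. -/

import Mathlib

/-!
Take a maximum matching `M` of `H` and suppose that it leaves more than `σ * n` vertices uncovered. Cut
the vertex set into `N = n / 3` blocks, each consisting of one vertex of `Q` and three vertices of `P`, so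
that the edges of `M` are blocks (`exists_blocks`). The set `F` of the unmatched vertices of `Q` has size
at least `3 * σ / 4 * N`, and a larger matching is constructed (`exists_larger`), a contradiction.

Sample a large constant number `m` of blocks. By a second moment computation (`sample_variance`), for most
samples almost all pairs `(u, v)` have about the expected degree, so that the link 3-graph of almost every
sampled `u` inherits the Ore-type condition after deletion of few vertices. In such a 3-graph on `V`, any
two adjacent vertices have degree sum greater than `2/3 * |V|²`, and every fractional vertex cover has
weight at least `|V| / 3` (`ore_cover`); by duality there is a perfect fractional matching (`frac_ore`).
Averaging these over the sampled `u` gives a fractional matching of the sampled 4-graph of weight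
`(1 - 3 * ε) * m` (`frac_sample`). With positive probability a sample moreover has so many indices in `F`
that fewer of its blocks than that are edges of `M`.

There are boundedly many types of samples, so one type has positive density, and the theorem of Erdős on
complete multipartite hypergraphs (`exists_box`) gives `m` sets of `t` blocks each, all of whose transversals
are samples of this type. The fractional matching, multiplied by `t` and rounded down, becomes a genuine
matching on these `m * t` blocks (`blowup_matching`) with more edges than `M` has there, and replacing one by
the other (`replace_matching`) enlarges `M`.

The heart of the argument is `ore_cover`. After normalisation the cover vanishes at some vertex `x₀`; with a
neighbour `y` of `x₀` of least weight, the links of `x₀` and `y` are confined to pairs of large weight, whose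
number is controlled by an Erdős–Gallai type estimate (`pairs_bound`). The remaining inequality between
densities is `num_main`.
-/

open Finset

/-! ### Numerical inequalities and half-integral rounding -/

/-- The case `2/7 < b < 1/2` of `num_main`, after `b` has been eliminated: it enters only through the
linear constraint `3 * k1 + 5 * k3 ≤ 7 / 3 - 2 * q`. -/
lemma num_endpoint (k1 k3 q A C : ℝ) (h1 : 0 ≤ k1) (h3 : 0 ≤ k3) (hq0 : 0 ≤ q) (hq : q ≤ 1)
    (hk : 3 * k1 + 5 * k3 ≤ 7 / 3 - 2 * q) (hAq : A ≤ q ^ 2) (hA : 1 / 3 ≤ A)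
    (hA' : A ≤ 4 * k1 ^ 2 ∨ A ≤ 2 * k1 * q - k1 ^ 2)
    (hC : C ≤ 4 * k3 ^ 2 ∨ C ≤ 2 * k3 * (1 - q) - k3 ^ 2) :
    A + C ≤ 1 / 3 + (1 - q) ^ 2 := by
  have hq4 : 4 / 7 ≤ q := by nlinarith
  by_cases hk3 : k3 ≤ 2 / 3 - q
  · have : C ≤ 2 * k3 := by
      rcases hC with hC | hC <;> nlinarith
    nlinarith
  push Not at hk3
  have hk1 : 1 / 4 ≤ k1 := by
    rcases hA' with hA' | hA' <;> nlinarith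
  have hC' : C ≤ 6 / 7 * k3 := by
    rcases hC with hC | hC <;> nlinarith
  rcases le_total (2 / 3) q with hq3 | hq3
  · rcases hA' with hA' | hA'
    · have : 0 ≤ (k1 - 1 / 4) * (7 / 9 - 2 * q / 3 - k1) :=
        mul_nonneg (by linarith) (by linarith)
      nlinarith [mul_nonneg (sub_nonneg.2 hq3) (sub_nonneg.2 hq)]
    · have : 0 ≤ (7 / 9 - 2 * q / 3 - k1) * (2 * q - (7 / 9 - 2 * q / 3) - k1 - 18 / 35) :=
        mul_nonneg (by linarith) (by linarith)
      nlinarith [sq_nonneg (q - 0.826)]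
  · rcases hA' with hA' | hA'
    · have : 0 ≤ (k1 - 1 / 4) * (q - 1 / 3 - k1) :=
        mul_nonneg (by linarith) (by linarith)
      nlinarith [mul_nonneg (sub_nonneg.2 hq3) (sub_nonneg.2 hq4)]
    · have : 0 ≤ (q - 1 / 3 - k1) * (2 * q - (q - 1 / 3) - k1 - 18 / 35) :=
        mul_nonneg (by linarith) (by linarith)
      nlinarith

/-- The numerical core of `ore_cover_zero`, all quantities being normalised by `|V|` or `|V|²`. There `b`
is the least weight of a neighbour `y` of a vertex `x₀` of weight zero, `q` is the proportion of the
vertices of weight at least `b`, `SN` and `SR` are the total weights of these vertices and of the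
others, `A` and `B` bound the link degrees of `x₀` and `y`, and `C` bounds the part of the link of `y`
among the vertices of weight less than `b`. The `k`s are the parameters with which `pairs_bound`
applies to `A`, `B` and `C`. -/
lemma num_main (b q SN SR A B C k1 k2 k3 : ℝ) (hb : 0 ≤ b) (hq0 : 0 ≤ q) (hq : q ≤ 1)
    (hSN : b * q ≤ SN) (hSR : 0 ≤ SR) (hS : SN + SR ≤ 1 / 3)
    (hAq : A ≤ q ^ 2) (hB1 : B ≤ 1) (hBC : B ≤ 1 - (1 - q) ^ 2 + C)
    (hk1 : b < 1 / 2 → (1 - 2 * b) * k1 = SN - b * q)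
    (hk2 : b < 1 → (1 - b) * k2 = SN + SR) (hk3 : b < 1 → (1 - b) * k3 = SR)
    (hA : b < 1 / 2 → A ≤ 4 * k1 ^ 2 ∨ A ≤ 2 * k1 * q - k1 ^ 2)
    (hB : b < 1 → B ≤ 4 * k2 ^ 2 ∨ B ≤ 2 * k2 - k2 ^ 2)
    (hC : b < 1 → C ≤ 4 * k3 ^ 2 ∨ C ≤ 2 * k3 * (1 - q) - k3 ^ 2) :
    A + B ≤ 4 / 3 := by
  by_cases hA3 : A < 1 / 3
  · linarith
  push Not at hA3
  have hq4 : 4 / 7 ≤ q := by nlinarith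
  have hbq : b * (4 / 7) ≤ b * q := mul_le_mul_of_nonneg_left hq4 hb
  have hb1 : b < 1 := by linarith
  have hb1' : 0 < 1 - b := by linarith
  replace hk2 := hk2 hb1
  replace hk3 := hk3 hb1
  have hk3' : 0 ≤ k3 := nonneg_of_mul_nonneg_right (hk3.symm ▸ hSR) hb1'
  have hk2' : 0 ≤ k2 := nonneg_of_mul_nonneg_right (by linarith) hb1'
  -- the region where `C` alone is small enough
  have key : k3 ≤ 2 / 3 - q → A + B ≤ 4 / 3 := by
    intro h
    have : C ≤ 2 * k3 := by
      rcases hC hb1 with hC | hC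
      · have := mul_nonneg hk3' (by linarith : 0 ≤ 1 / 2 - k3)
        linarith
      · have := mul_nonneg hk3' hq0
        have := sq_nonneg k3
        linarith
    linarith
  rcases le_or_gt (1 / 2) b with hb2 | hb2
  · apply key
    refine le_of_mul_le_mul_left ?_ hb1'
    have : 0 ≤ (b - 1 / 2) * (q - 1 / 3) := mul_nonneg (by linarith) (by linarith)
    linarith
  have hb2' : 0 < 1 - 2 * b := by linarith
  replace hk1 := hk1 hb2
  have hk1' : 0 ≤ k1 := nonneg_of_mul_nonneg_right (by linarith) hb2'
  rcases le_or_gt b (2 / 7) with hb3 | hb3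
  · have hA4 : 2 / 3 ≤ q → k1 ≤ 1 / 3 := by
      intro h
      refine le_of_mul_le_mul_left ?_ hb2'
      have : b * (2 / 3) ≤ b * q := mul_le_mul_of_nonneg_left h hb
      linarith
    rcases le_or_gt b (6 / 25) with hb4 | hb4
    · have hA5 : A ≤ 5 / 9 := by
        rcases le_or_gt (2 / 3) q with hq3 | hq3
        · have := hA4 hq3
          rcases hA hb2 with h | h
          · have := mul_nonneg (sub_nonneg.2 this) (add_nonneg hk1' (by norm_num : (0 : ℝ) ≤ 1 / 3))
            linarith
          · have := mul_nonneg (sub_nonneg.2 this) (by linarith : 0 ≤ 2 * q - k1 - 1 / 3)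
            linarith
        · have := mul_nonneg (sub_nonneg.2 hq3.le) (add_nonneg hq0 (by norm_num : (0 : ℝ) ≤ 2 / 3))
          linarith
      have hk2u : k2 ≤ 25 / 57 := by
        have : 19 / 25 * k2 ≤ (1 - b) * k2 := mul_le_mul_of_nonneg_right (by linarith) hk2'
        linarith
      have hB5 : B ≤ 7 / 9 := by
        rcases hB hb1 with h | h
        · have := mul_nonneg (sub_nonneg.2 hk2u) (add_nonneg hk2' (by norm_num : (0 : ℝ) ≤ 25 / 57))
          linarith
        · have := mul_nonneg (sub_nonneg.2 hk2u) (by linarith : 0 ≤ 2 - k2 - 25 / 57)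
          linarith
      linarith
    · have hA5 : A ≤ 4 / 9 := by
        rcases le_or_gt (2 / 3) q with hq3 | hq3
        · have := hA4 hq3
          rcases hA hb2 with h | h
          · have := mul_nonneg (sub_nonneg.2 this) (add_nonneg hk1' (by norm_num : (0 : ℝ) ≤ 1 / 3))
            linarith
          · have h5 : k1 ≤ (25 - 18 * q) / 39 := by
              refine le_of_mul_le_mul_left ?_ hb2'
              have : 0 ≤ (b - 6 / 25) * (q - 2 / 3) := mul_nonneg (by linarith) (by linarith)
              linarith
            have h6 : 0 ≤ ((25 - 18 * q) / 39 - k1) * (2 * q - k1 - (25 - 18 * q) / 39) :=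
              mul_nonneg (by linarith) (by linarith)
            have h7 := sq_nonneg (q - 4 / 5)
            linarith
        · have := mul_nonneg (sub_nonneg.2 hq3.le) (add_nonneg hq0 (by norm_num : (0 : ℝ) ≤ 2 / 3))
          linarith
      have hk2u : k2 ≤ 7 / 15 := by
        have : 5 / 7 * k2 ≤ (1 - b) * k2 := mul_le_mul_of_nonneg_right (by linarith) hk2'
        linarith
      have hB5 : B ≤ 8 / 9 := by
        rcases hB hb1 with h | h
        · have := mul_nonneg (sub_nonneg.2 hk2u) (add_nonneg hk2' (by norm_num : (0 : ℝ) ≤ 7 / 15))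
          linarith
        · have := mul_nonneg (sub_nonneg.2 hk2u) (by linarith : 0 ≤ 2 - k2 - 7 / 15)
          linarith
      linarith
  · have hlin : k1 + k3 - 1 / 3 ≤ b * (2 * k1 + k3 - q) := by linarith
    by_cases hk : k3 ≤ 2 / 3 - q
    · exact key hk
    push Not at hk
    have h2 : 3 * k1 + 5 * k3 ≤ 7 / 3 - 2 * q := by
      by_contra! h
      have e1 := mul_pos (by linarith : 0 < 1 / 2 - b) (sub_pos.2 h)
      have e2 := mul_pos (by linarith : 0 < b - 2 / 7) (sub_pos.2 hk)
      linarith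
    have := num_endpoint k1 k3 q A C hk1' hk3' hq0 hq h2 hAq hA3 (hA hb2) (hC hb1)
    linarith

/-- Rounding each weight `w v` to `0`, `1/2` or `1` according to the thresholds `θ` and `1 - θ` does not
increase the total weight on average over `θ` uniform in `(0, 1/2]`, hence not for some `θ`. -/
lemma exists_threshold {α : Type*} (V : Finset α) (w : α → ℝ) (hw : ∀ v ∈ V, 0 ≤ w v) :
    ∃ θ : ℝ, 0 < θ ∧ θ ≤ 1 / 2 ∧
      ((#{v ∈ V | 1 - θ ≤ w v} : ℝ) + #{v ∈ V | θ ≤ w v}) ≤ 2 * ∑ v ∈ V, w v := by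
  classical
  let μ := MeasureTheory.volume.restrict (Set.Ioc (0:ℝ) (1/2))
  let f : ℝ → ℝ := fun θ => ∑ v ∈ V, ((Set.Ici (1 - w v)).indicator 1 θ + (Set.Iic (w v)).indicator 1 θ)
  have hIci : ∀ v, MeasureTheory.Integrable (fun θ : ℝ => (Set.Ici (1 - w v)).indicator (1 : ℝ → ℝ) θ) μ := by
    intro v
    exact (MeasureTheory.integrable_const (1:ℝ)).indicator measurableSet_Ici
  have hIic : ∀ v, MeasureTheory.Integrable (fun θ : ℝ => (Set.Iic (w v)).indicator (1 : ℝ → ℝ) θ) μ := by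
    intro v
    exact (MeasureTheory.integrable_const (1:ℝ)).indicator measurableSet_Iic
  have hf : MeasureTheory.IntegrableOn f (Set.Ioc (0:ℝ) (1/2)) := by
    apply MeasureTheory.integrable_finsetSum
    intro v _
    exact (hIci v).add (hIic v)
  obtain ⟨θ, hθ, hle⟩ := MeasureTheory.exists_le_setAverage (μ := MeasureTheory.volume)
    (s := Set.Ioc (0:ℝ) (1/2)) (by simp) (by simp) hf
  refine ⟨θ, hθ.1, hθ.2, ?_⟩
  have hfe : f θ = (#{v ∈ V | 1 - θ ≤ w v} : ℝ) + #{v ∈ V | θ ≤ w v} := by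
    simp only [f, Finset.sum_add_distrib, Finset.card_filter, Set.indicator_apply, Set.mem_Ici, Set.mem_Iic]
    push_cast
    congr 1
    apply Finset.sum_congr rfl
    intro v _
    simp only [Pi.one_apply]
    congr 1
    apply propext
    constructor <;> intro h <;> linarith
  rw [← hfe]
  refine hle.trans ?_
  rw [MeasureTheory.setAverage_eq]
  have hI : ∫ θ in Set.Ioc (0:ℝ) (1/2), f θ ≤ ∑ v ∈ V, w v := by
    simp only [f]
    rw [MeasureTheory.integral_finsetSum _ (fun v _ => by exact (hIci v).add (hIic v))]
    apply Finset.sum_le_sum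
    intro v hv
    have hv0 := hw v hv
    rw [MeasureTheory.integral_add (hIci v) (hIic v), MeasureTheory.integral_indicator_one measurableSet_Ici,
      MeasureTheory.integral_indicator_one measurableSet_Iic]
    have e1 : (MeasureTheory.volume.restrict (Set.Ioc (0:ℝ) (1/2))).real (Set.Iic (w v)) ≤ min (1/2) (w v) := by
      rw [MeasureTheory.measureReal_restrict_apply measurableSet_Iic]
      have : Set.Iic (w v) ∩ Set.Ioc (0:ℝ) (1/2) = Set.Ioc 0 (min (1/2) (w v)) := by
        ext x; simp; tauto
      rw [this, Real.volume_real_Ioc]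
      simp [hv0]
    have e2 : (MeasureTheory.volume.restrict (Set.Ioc (0:ℝ) (1/2))).real (Set.Ici (1 - w v)) ≤ max 0 (w v - 1/2) := by
      rw [MeasureTheory.measureReal_restrict_apply measurableSet_Ici]
      have : Set.Ici (1 - w v) ∩ Set.Ioc (0:ℝ) (1/2) ⊆ Set.Icc (1 - w v) (1/2) := by
        intro x; simp; tauto
      refine (MeasureTheory.measureReal_mono this (by simp)).trans ?_
      rw [Real.volume_real_Icc]
      rw [max_comm]
      apply max_le_max_left
      linarith
    refine (add_le_add e2 e1).trans ?_
    rcases le_total (w v) (1/2) with h | h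
    · rw [max_eq_left (by linarith), min_eq_right h]; linarith
    · rw [max_eq_right (by linarith), min_eq_left h]; linarith
  simp only [Real.volume_real_Ioc, smul_eq_mul]
  norm_num
  linarith

/-! ### Fractional covers under an Ore-type degree condition -/

/-- A weighted Erdős–Gallai bound: if the total weight is at most `c * k`, the number of ordered pairs
of weight sum at least `c` is bounded by one of the two extremal configurations (a clique on `2 * k`
vertices, or all pairs meeting `k` given vertices). With `X = {w ≥ (1 - θ) c} ⊆ Z = {w ≥ θ c}` from
`exists_threshold`, every such pair lies in `Z × Z` or joins `X` to the complement of `Z`; the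
resulting count, quadratic in `|Z|`, is largest at an end of its range. -/
lemma pairs_bound {α : Type*} (V : Finset α) (w : α → ℝ) (hw : ∀ v ∈ V, 0 ≤ w v)
    (c k : ℝ) (hc : 0 < c) (hk : ∑ v ∈ V, w v ≤ c * k) :
    (#{p ∈ V ×ˢ V | c ≤ w p.1 + w p.2} : ℝ) ≤ 4 * k ^ 2 ∨
      (#{p ∈ V ×ˢ V | c ≤ w p.1 + w p.2} : ℝ) ≤ 2 * k * #V - k ^ 2 := by
  classical
  obtain ⟨θ, hθ0, hθ1, hθ⟩ := exists_threshold V (fun v => w v / c)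
    (fun v hv => div_nonneg (hw v hv) hc.le)
  set SX := {v ∈ V | 1 - θ ≤ w v / c} with hSX
  set SZ := {v ∈ V | θ ≤ w v / c} with hSZ
  have hXZ : SX ⊆ SZ := by
    intro v hv
    simp only [hSX, hSZ, mem_filter] at hv ⊢
    exact ⟨hv.1, by linarith [hv.2]⟩
  have hZV : SZ ⊆ V := filter_subset _ _
  have hsub : {p ∈ V ×ˢ V | c ≤ w p.1 + w p.2} ⊆
      (SZ ×ˢ SZ) ∪ ((SX ×ˢ (V \ SZ)) ∪ ((V \ SZ) ×ˢ SX)) := by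
    rintro ⟨s, t⟩ hp
    simp only [mem_filter, mem_product] at hp
    obtain ⟨⟨hs, ht⟩, hst⟩ := hp
    have hst' : 1 ≤ w s / c + w t / c := by
      rw [← add_div, le_div_iff₀ hc]; linarith
    simp only [mem_union, mem_product, mem_sdiff, hSX, hSZ, mem_filter, hs, ht, true_and]
    by_cases h1 : θ ≤ w s / c
    · by_cases h2 : θ ≤ w t / c
      · exact Or.inl ⟨h1, h2⟩
      · exact Or.inr (Or.inl ⟨by linarith, h2⟩)
    · exact Or.inr (Or.inr ⟨h1, by linarith⟩)
  have hcard := (card_le_card hsub).trans ((card_union_le _ _).trans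
    (Nat.add_le_add_left (card_union_le _ _) _))
  have h1 : (#SX : ℝ) ≤ #SZ := by exact_mod_cast card_le_card hXZ
  have h2 : (#SZ : ℝ) ≤ #V := by exact_mod_cast card_le_card hZV
  have h3 : (#(V \ SZ) : ℝ) = #V - #SZ := by
    rw [card_sdiff_of_subset hZV, Nat.cast_sub (card_le_card hZV)]
  have h4 : (#SX : ℝ) + #SZ ≤ 2 * k := by
    refine hθ.trans ?_
    rw [← sum_div]
    have : (∑ v ∈ V, w v) / c ≤ k := by rw [div_le_iff₀ hc]; linarith
    linarith
  have h0 : (0 : ℝ) ≤ #SX := Nat.cast_nonneg _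
  have hP : (#{p ∈ V ×ˢ V | c ≤ w p.1 + w p.2} : ℝ) ≤
      (#SZ : ℝ) ^ 2 + 2 * #SX * (#V - #SZ) := by
    have : (#{p ∈ V ×ˢ V | c ≤ w p.1 + w p.2} : ℝ) ≤
        (#SZ * #SZ + (#SX * #(V \ SZ) + #(V \ SZ) * #SX) : ℝ) := by
      simp only [card_product] at hcard
      exact_mod_cast hcard
    rw [h3] at this
    linarith
  generalize (#{p ∈ V ×ˢ V | c ≤ w p.1 + w p.2} : ℝ) = P at *
  generalize (#SX : ℝ) = X at *
  generalize (#SZ : ℝ) = Z at *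
  generalize (#V : ℝ) = q at *
  clear hcard hsub hθ hk
  rcases le_or_gt k Z with hkZ | hkZ
  · have e1 : P ≤ Z ^ 2 + 2 * (2 * k - Z) * (q - Z) := by
      have := mul_nonneg (by linarith : 0 ≤ 2 * k - Z - X) (sub_nonneg.2 h2)
      linarith
    rcases le_or_gt (3 * Z) (k + 2 * q) with h5 | h5
    · right
      have := mul_nonneg (sub_nonneg.2 hkZ) (sub_nonneg.2 h5)
      linarith
    · left
      have := mul_nonneg (by linarith : 0 ≤ 2 * k - Z) (by linarith : 0 ≤ 3 * Z + 2 * k - 2 * q)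
      linarith
  · have e1 : P ≤ 2 * Z * q - Z ^ 2 := by
      have := mul_nonneg (sub_nonneg.2 h1) (sub_nonneg.2 h2)
      linarith
    rcases le_or_gt k q with h5 | h5
    · right
      have := mul_nonneg (sub_nonneg.2 hkZ.le) (by linarith : 0 ≤ 2 * q - k - Z)
      linarith
    · left
      nlinarith [sq_nonneg (q - Z)]

open Classical in
/-- The number of ordered pairs `(y, z)` in `V` with `E x y z`. For the symmetric relation of a 3-graph
on `V` this is twice the degree of `x`. -/
noncomputable def linkDeg {α : Type*} (V : Finset α) (E : α → α → α → Prop) (x : α) : ℕ :=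
  #{p ∈ V ×ˢ V | E x p.1 p.2}

/-- `ore_cover` for a cover `w` vanishing at some vertex `x₀`. Let `y` be a neighbour of `x₀` of least
weight `b`. The link of `x₀` lives on pairs of weight sum at least `1` within `{w ≥ b}`, that of `y` on
pairs of weight sum at least `1 - b`; if `w` had total weight less than `|V| / 3`, `num_main` would
bound the sum of the two link degrees by `4/3 * |V|²`. -/
lemma ore_cover_zero {α : Type*} (V : Finset α) (E : α → α → α → Prop)
    (h23 : ∀ x y z, E x y z → E x z y)
    (hiso : ∀ x ∈ V, ∃ y ∈ V, ∃ z ∈ V, E x y z)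
    (hore : ∀ x ∈ V, ∀ y ∈ V, ∀ z ∈ V, E x y z →
      4 / 3 * (#V : ℝ) ^ 2 < linkDeg V E x + linkDeg V E y)
    (w : α → ℝ) (hw : ∀ v ∈ V, 0 ≤ w v)
    (hcov : ∀ x ∈ V, ∀ y ∈ V, ∀ z ∈ V, E x y z → 1 ≤ w x + w y + w z)
    (x₀ : α) (hx₀ : x₀ ∈ V) (hw₀ : w x₀ = 0) :
    (#V : ℝ) / 3 ≤ ∑ v ∈ V, w v := by
  classical
  by_contra! hlt
  obtain ⟨y, hy, hmin⟩ : ∃ y ∈ {y ∈ V | ∃ z ∈ V, E x₀ y z},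
      ∀ y' ∈ {y ∈ V | ∃ z ∈ V, E x₀ y z}, w y ≤ w y' := by
    apply exists_min_image
    obtain ⟨y, hy, z, hz, h⟩ := hiso x₀ hx₀
    exact ⟨y, by simp only [mem_filter]; exact ⟨hy, z, hz, h⟩⟩
  simp only [mem_filter, and_imp, forall_exists_index] at hy hmin
  obtain ⟨hyV, z, hzV, hE⟩ := hy
  have hO := hore x₀ hx₀ y hyV z hzV hE
  set b := w y with hb
  have hb0 : 0 ≤ b := hw y hyV
  set N := {v ∈ V | b ≤ w v} with hN
  set R := {v ∈ V | ¬ b ≤ w v} with hR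
  have hNV : N ⊆ V := filter_subset _ _
  have hRV : R ⊆ V := filter_subset _ _
  have hn : (0 : ℝ) < #V := by exact_mod_cast card_pos.2 ⟨x₀, hx₀⟩
  have hcardNR : (#N : ℝ) + #R = #V := by exact_mod_cast card_filter_add_card_filter_not (s := V) _
  have hsumNR : ∑ v ∈ N, w v + ∑ v ∈ R, w v = ∑ v ∈ V, w v := sum_filter_add_sum_filter_not _ _ _
  have hA : (linkDeg V E x₀ : ℝ) ≤ #{p ∈ N ×ˢ N | 1 - 2 * b ≤ (w p.1 - b) + (w p.2 - b)} := by
    norm_cast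
    apply card_le_card
    rintro ⟨s, t⟩ hp
    simp only [mem_filter, mem_product, hN] at hp ⊢
    obtain ⟨⟨hs, ht⟩, h⟩ := hp
    have := hcov x₀ hx₀ s hs t ht h
    exact ⟨⟨⟨hs, hmin s hs t ht h⟩, ⟨ht, hmin t ht s hs (h23 _ _ _ h)⟩⟩, by linarith⟩
  have hAN : (#{p ∈ N ×ˢ N | 1 - 2 * b ≤ (w p.1 - b) + (w p.2 - b)} : ℝ) ≤ (#N : ℝ) ^ 2 := by
    have := card_filter_le (N ×ˢ N) (fun p => 1 - 2 * b ≤ (w p.1 - b) + (w p.2 - b))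
    rw [card_product] at this
    rw [sq]; exact_mod_cast this
  have hB : (linkDeg V E y : ℝ) ≤ #{p ∈ V ×ˢ V | 1 - b ≤ w p.1 + w p.2} := by
    norm_cast
    apply card_le_card
    rintro ⟨s, t⟩ hp
    simp only [mem_filter, mem_product] at hp ⊢
    obtain ⟨⟨hs, ht⟩, h⟩ := hp
    have := hcov y hyV s hs t ht h
    exact ⟨⟨hs, ht⟩, by linarith⟩
  have hBV : (#{p ∈ V ×ˢ V | 1 - b ≤ w p.1 + w p.2} : ℝ) ≤ (#V : ℝ) ^ 2 := by
    have := card_filter_le (V ×ˢ V) (fun p => 1 - b ≤ w p.1 + w p.2)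
    rw [card_product] at this
    rw [sq]; exact_mod_cast this
  have hBC : (#{p ∈ V ×ˢ V | 1 - b ≤ w p.1 + w p.2} : ℝ) ≤ (#V : ℝ) ^ 2 - (#R : ℝ) ^ 2 +
      #{p ∈ R ×ˢ R | 1 - b ≤ w p.1 + w p.2} := by
    have hs : {p ∈ V ×ˢ V | 1 - b ≤ w p.1 + w p.2} ⊆
        ((V ×ˢ V) \ (R ×ˢ R)) ∪ {p ∈ R ×ˢ R | 1 - b ≤ w p.1 + w p.2} := by
      intro p hp
      simp only [mem_filter, mem_union, mem_sdiff] at hp ⊢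
      tauto
    have h1 := (card_le_card hs).trans (card_union_le _ _)
    have h2 : #((V ×ˢ V) \ (R ×ˢ R)) + #R * #R = #V * #V := by
      rw [← card_product, ← card_product]
      exact card_sdiff_add_card_eq_card (product_subset_product hRV hRV)
    have h1' : (#{p ∈ V ×ˢ V | 1 - b ≤ w p.1 + w p.2} : ℝ) ≤ #((V ×ˢ V) \ (R ×ˢ R)) +
      #{p ∈ R ×ˢ R | 1 - b ≤ w p.1 + w p.2} := by exact_mod_cast h1
    have h2' : (#((V ×ˢ V) \ (R ×ˢ R)) : ℝ) + #R * #R = #V * #V := by exact_mod_cast h2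
    linarith
  have hSN : b * #N ≤ ∑ v ∈ N, w v := by
    rw [mul_comm, ← nsmul_eq_mul]
    apply card_nsmul_le_sum
    intro v hv
    simp only [hN, mem_filter] at hv
    exact hv.2
  have hSR : 0 ≤ ∑ v ∈ R, w v := sum_nonneg fun v hv => hw v (hRV hv)
  have pA : b < 1 / 2 → _ := fun hb2 : b < 1 / 2 => pairs_bound N (fun v => w v - b)
    (fun v hv => by simp only [hN, mem_filter] at hv; linarith [hv.2]) (1 - 2 * b)
    ((∑ v ∈ N, w v - b * #N) / (1 - 2 * b)) (by linarith)
    (by rw [mul_div_cancel₀ _ (by linarith : 1 - 2 * b ≠ 0), sum_sub_distrib]; simp [mul_comm])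
  have pB : b < 1 → _ := fun hb2 : b < 1 => pairs_bound V w hw (1 - b)
    ((∑ v ∈ N, w v + ∑ v ∈ R, w v) / (1 - b)) (by linarith)
    (by rw [mul_div_cancel₀ _ (by linarith : 1 - b ≠ 0), hsumNR])
  have pC : b < 1 → _ := fun hb2 : b < 1 => pairs_bound R w (fun v hv => hw v (hRV hv)) (1 - b)
    ((∑ v ∈ R, w v) / (1 - b)) (by linarith)
    (by rw [mul_div_cancel₀ _ (by linarith : 1 - b ≠ 0)])
  generalize (#{p ∈ N ×ˢ N | 1 - 2 * b ≤ (w p.1 - b) + (w p.2 - b)} : ℝ) = A at *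
  generalize (#{p ∈ V ×ˢ V | 1 - b ≤ w p.1 + w p.2} : ℝ) = B at *
  generalize (#{p ∈ R ×ˢ R | 1 - b ≤ w p.1 + w p.2} : ℝ) = C at *
  rw [← hsumNR] at hlt
  generalize (∑ v ∈ N, w v) = SN at *
  generalize (∑ v ∈ R, w v) = SR at *
  have hnn : (0 : ℝ) < (#V : ℝ) ^ 2 := by positivity
  have hq : (#R : ℝ) / #V = 1 - #N / #V := by field_simp; linarith
  have hR0 : (0 : ℝ) ≤ #R := Nat.cast_nonneg _
  have hN0 : (0 : ℝ) ≤ #N := Nat.cast_nonneg _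
  clear hmin hore hcov hiso
  have main := num_main b (#N / #V) (SN / #V) (SR / #V) (A / (#V : ℝ) ^ 2) (B / (#V : ℝ) ^ 2)
    (C / (#V : ℝ) ^ 2) ((SN - b * #N) / (1 - 2 * b) / #V) ((SN + SR) / (1 - b) / #V)
    (SR / (1 - b) / #V) hb0 (by positivity) (by rw [div_le_one hn]; linarith)
    (by rw [← mul_div_assoc]; gcongr) (by positivity)
    (by rw [← add_div, div_le_iff₀ hn]; linarith)
    (by rw [div_pow]; gcongr)
    (by rw [div_le_one hnn]; exact hBV)
    (by
      rw [← hq, div_le_iff₀ hnn]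
      have : (1 - ((#R : ℝ) / #V) ^ 2 + C / (#V : ℝ) ^ 2) * (#V : ℝ) ^ 2 =
        (#V : ℝ) ^ 2 - (#R : ℝ) ^ 2 + C := by field_simp
      rw [this]; exact hBC)
    (fun h => by have : 1 - 2 * b ≠ 0 := by linarith
                 field_simp)
    (fun h => by have : 1 - b ≠ 0 := by linarith
                 field_simp)
    (fun h => by have : 1 - b ≠ 0 := by linarith
                 field_simp)
    (fun h => by
      have : 1 - 2 * b ≠ 0 := by linarith
      generalize (SN - b * #N) / (1 - 2 * b) = K at *
      rw [div_le_iff₀ hnn, div_le_iff₀ hnn]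
      refine (pA h).imp (fun h => h.trans_eq ?_) (fun h => h.trans_eq ?_) <;> field_simp)
    (fun h => by
      generalize (SN + SR) / (1 - b) = K at *
      rw [div_le_iff₀ hnn, div_le_iff₀ hnn]
      refine (pB h).imp (fun h => h.trans_eq ?_) (fun h => h.trans_eq ?_) <;> field_simp)
    (fun h => by
      rw [← hq]
      generalize SR / (1 - b) = K at *
      rw [div_le_iff₀ hnn, div_le_iff₀ hnn]
      refine (pC h).imp (fun h => h.trans_eq ?_) (fun h => h.trans_eq ?_) <;> field_simp)
  rw [← add_div, div_le_iff₀ hnn] at main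
  linarith

/-- In a 3-graph without isolated vertices in which any two adjacent vertices have degree sum greater
than `2/3 * |V|²`, every fractional vertex cover has weight at least `|V| / 3`. Passing from `w` to
`(w - w₀) / (1 - 3 * w₀)`, where `w₀` is the minimum of `w`, reduces to a cover with a zero. -/
lemma ore_cover {α : Type*} (V : Finset α) (E : α → α → α → Prop)
    (h23 : ∀ x y z, E x y z → E x z y)
    (hiso : ∀ x ∈ V, ∃ y ∈ V, ∃ z ∈ V, E x y z)
    (hore : ∀ x ∈ V, ∀ y ∈ V, ∀ z ∈ V, E x y z →
      4 / 3 * (#V : ℝ) ^ 2 < linkDeg V E x + linkDeg V E y)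
    (w : α → ℝ) (hw : ∀ v ∈ V, 0 ≤ w v)
    (hcov : ∀ x ∈ V, ∀ y ∈ V, ∀ z ∈ V, E x y z → 1 ≤ w x + w y + w z) :
    (#V : ℝ) / 3 ≤ ∑ v ∈ V, w v := by
  rcases V.eq_empty_or_nonempty with rfl | hV
  · simp
  obtain ⟨x₀, hx₀, hmin⟩ := exists_min_image V w hV
  have hsum : w x₀ * #V ≤ ∑ v ∈ V, w v := by
    rw [mul_comm, ← nsmul_eq_mul]
    exact card_nsmul_le_sum _ _ _ hmin
  have hn : (0 : ℝ) ≤ #V := Nat.cast_nonneg _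
  rcases le_or_gt (1 / 3) (w x₀) with h | h
  · nlinarith
  have h3 : 0 < 1 - 3 * w x₀ := by linarith
  have := ore_cover_zero V E h23 hiso hore (fun v => (w v - w x₀) / (1 - 3 * w x₀))
    (fun v hv => div_nonneg (by linarith [hmin v hv]) h3.le)
    (fun x hx y hy z hz hE => by
      rw [← add_div, ← add_div, le_div_iff₀ h3]
      linarith [hcov x hx y hy z hz hE])
    x₀ hx₀ (by simp)
  rw [← sum_div, le_div_iff₀ h3, sum_sub_distrib] at this
  simp only [sum_const, nsmul_eq_mul] at this
  linarith

/-! ### Fractional matchings via linear programming duality -/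

/-- Linear programming duality: if every fractional cover of `Ed` has weight at least `k`, there is a
fractional matching of weight at least `k`. Otherwise the vertex loads of the fractional edge weightings
of total weight `k` form a compact convex set disjoint from `{y | y ≤ 1}`, and a separating functional
is, after scaling, a cover of weight less than `k`. -/
lemma frac_of_cover {α : Type*} [Fintype α] [DecidableEq α] (Ed : Finset (Finset α)) (k : ℝ)
    (h : ∀ w : α → ℝ, (∀ v, 0 ≤ w v) → (∀ s ∈ Ed, 1 ≤ ∑ v ∈ s, w v) → k ≤ ∑ v, w v) :
    ∃ f : Finset α → ℝ, (∀ s, 0 ≤ f s) ∧ k ≤ ∑ s ∈ Ed, f s ∧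
      ∀ v, ∑ s ∈ Ed with v ∈ s, f s ≤ 1 := by
  rcases le_or_gt k 0 with hk | hk
  · exact ⟨fun _ => 0, fun _ => le_rfl, by simpa using hk, by simp⟩
  let L : (Ed → ℝ) →ₗ[ℝ] (α → ℝ) := LinearMap.pi fun v =>
    ∑ s : Ed, (if v ∈ s.1 then k else 0) • LinearMap.proj (R := ℝ) (φ := fun _ : Ed => ℝ) s
  have hL : ∀ g v, L g v = ∑ s : Ed, if v ∈ s.1 then k * g s else 0 := by
    intro g v
    simp only [L, LinearMap.pi_apply, LinearMap.sum_apply, LinearMap.smul_apply,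
      LinearMap.proj_apply, smul_eq_mul, ite_mul, zero_mul]
  let C := L '' stdSimplex ℝ Ed
  let D : Set (α → ℝ) := {y | ∀ v, y v ≤ 1}
  have hC1 : Convex ℝ C := (convex_stdSimplex ℝ Ed).linear_image L
  have hC2 : IsCompact C := (isCompact_stdSimplex ℝ Ed).image L.continuous_of_finiteDimensional
  have hD1 : Convex ℝ D := by
    intro x hx y hy a b ha hb hab v
    simp only [Pi.add_apply, Pi.smul_apply, smul_eq_mul]
    nlinarith [hx v, hy v]
  have hD2 : IsClosed D := by
    simp only [D, Set.ofPred_forall]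
    exact isClosed_iInter fun v => isClosed_le (continuous_apply v) continuous_const
  by_cases hdisj : Disjoint D C
  · exfalso
    obtain ⟨φ, u, u', hφ, huu, hφ'⟩ := geometric_hahn_banach_closed_compact hD1 hD2 hC1 hC2 hdisj
    set w : α → ℝ := fun v => φ (Pi.single v 1) with hwdef
    have hφw : ∀ y : α → ℝ, φ y = ∑ v, y v * w v := by
      intro y
      conv_lhs => rw [pi_eq_sum_univ' y]
      rw [map_sum]
      apply sum_congr rfl
      intro v _
      rw [map_smul, smul_eq_mul, hwdef]
    have hu : 0 < u := by
      have := hφ 0 (fun v => by simp)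
      simpa using this
    have hw0 : ∀ v, 0 ≤ w v := by
      intro v
      by_contra! hneg
      have := hφ (-(u / (- w v)) • Pi.single v 1) (by
        intro v'
        have : 0 ≤ u / (- w v) := div_nonneg hu.le (by linarith)
        by_cases hv : v' = v
        · subst hv; simp; linarith
        · simp [hv])
      rw [map_smul, smul_eq_mul] at this
      change -(u / (- w v)) * w v < u at this
      have e : -(u / (- w v)) * w v = u := by
        have : w v ≠ 0 := hneg.ne
        field_simp
      linarith
    have hsum : ∑ v, w v < u := by
      have := hφ (fun _ => 1) (fun v => le_rfl)
      rw [hφw] at this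
      simpa using this
    have hedge : ∀ s ∈ Ed, u' / k ≤ ∑ v ∈ s, w v := by
      intro s hs
      have := hφ' (L (Pi.single ⟨s, hs⟩ 1)) ⟨_, single_mem_stdSimplex ℝ _, rfl⟩
      rw [hφw] at this
      have e : ∀ v, L (Pi.single ⟨s, hs⟩ 1) v = if v ∈ s then k else 0 := by
        intro v
        rw [hL, Finset.sum_eq_single (⟨s, hs⟩ : Ed)]
        · simp
        · intro b _ hb; simp [hb]
        · simp
      simp only [e, ite_mul, zero_mul, ← sum_filter, ← mul_sum] at this
      simp only [filter_mem_eq_inter, univ_inter] at this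
      rw [div_le_iff₀ hk]
      linarith
    have hu' : 0 < u' := hu.trans huu
    have hc : 0 < u' / k := div_pos hu' hk
    have := h (fun v => w v / (u' / k)) (fun v => div_nonneg (hw0 v) hc.le) (fun s hs => by
      rw [← sum_div, le_div_iff₀ hc, one_mul]
      exact hedge s hs)
    rw [← sum_div, le_div_iff₀ hc, mul_div_cancel₀ _ hk.ne'] at this
    linarith
  · rw [Set.not_disjoint_iff] at hdisj
    obtain ⟨y, hyD, g, hg, rfl⟩ := hdisj
    refine ⟨fun s => if hs : s ∈ Ed then k * g ⟨s, hs⟩ else 0, ?_, ?_, ?_⟩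
    · intro s
      dsimp only
      split_ifs with hs
      · exact mul_nonneg hk.le (hg.1 _)
      · exact le_rfl
    · rw [← sum_attach]
      simp only [coe_mem, dite_true, Subtype.coe_eta]
      rw [← mul_sum]
      have : ∑ i ∈ Ed.attach, g i = 1 := hg.2
      rw [this, mul_one]
    · intro v
      have := hyD v
      rw [hL] at this
      refine le_trans (le_of_eq ?_) this
      rw [sum_filter, ← sum_attach]
      simp

/-- A 3-graph satisfying the Ore-type condition of `ore_cover` has a perfect fractional matching. -/
lemma frac_ore {α : Type*} [Fintype α] [DecidableEq α] (V : Finset α) (E : α → α → α → Prop)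
    (h12 : ∀ x y z, E x y z → E y x z) (h23 : ∀ x y z, E x y z → E x z y)
    (hne : ∀ x y z, E x y z → x ≠ y)
    (hiso : ∀ x ∈ V, ∃ y ∈ V, ∃ z ∈ V, E x y z)
    (hore : ∀ x ∈ V, ∀ y ∈ V, ∀ z ∈ V, E x y z →
      4 / 3 * (#V : ℝ) ^ 2 < linkDeg V E x + linkDeg V E y) :
    ∃ f : Finset α → ℝ, (∀ s, 0 ≤ f s) ∧
      (∀ s, f s ≠ 0 → ∃ x y z, E x y z ∧ s = {x, y, z}) ∧
      (#V : ℝ) / 3 ≤ ∑ s, f s ∧ ∀ v, ∑ s with v ∈ s, f s ≤ 1 := by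
  classical
  obtain ⟨f, hf0, hf1, hf2⟩ := frac_of_cover
    {s | ∃ x ∈ V, ∃ y ∈ V, ∃ z ∈ V, E x y z ∧ s = {x, y, z}} ((#V : ℝ) / 3) (by
      intro w hw hcov
      refine (ore_cover V E h23 hiso hore w (fun v _ => hw v) ?_).trans
        (sum_le_sum_of_subset_of_nonneg (subset_univ _) fun v _ _ => hw v)
      intro x hx y hy z hz hE
      have := hcov {x, y, z} (by
        simp only [mem_filter, mem_univ, true_and]
        exact ⟨x, hx, y, hy, z, hz, hE, rfl⟩)
      have h1 := hne _ _ _ hE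
      have h2 := hne _ _ _ (h23 _ _ _ hE)
      have h3 := hne _ _ _ (h23 _ _ _ (h12 _ _ _ hE))
      rw [sum_insert (by simp [h1, h2]), sum_pair h3] at this
      linarith)
  set Ed : Finset (Finset α) := {s | ∃ x ∈ V, ∃ y ∈ V, ∃ z ∈ V, E x y z ∧ s = {x, y, z}} with hEd
  refine ⟨fun s => if s ∈ Ed then f s else 0, ?_, ?_, ?_, ?_⟩
  · intro s
    dsimp only
    split_ifs
    · exact hf0 s
    · exact le_rfl
  · intro s hs
    have : s ∈ Ed := by
      by_contra h
      simp [h] at hs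
    simp only [hEd, mem_filter, mem_univ, true_and] at this
    obtain ⟨x, _, y, _, z, _, h⟩ := this
    exact ⟨x, y, z, h⟩
  · rw [← sum_filter]
    simpa [filter_mem_eq_inter] using hf1
  · intro v
    refine le_trans (le_of_eq ?_) (hf2 v)
    rw [← sum_filter, filter_filter]
    congr 1
    ext s
    simp [and_comm]

/-! ### Complete multipartite boxes in dense relations -/

/-- Erdős: a set of positive density in `[N]^m` contains a product of `m` sets of size `t`, for `N`
large. In the induction step, fix `K` first coordinates with many extensions each; many tails extend
at least `t` of them, and by pigeonhole many tails extend the same `t`. -/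
lemma exists_box (m : ℕ) : ∀ (t : ℕ) (c : ℝ), 0 < c → ∃ N₀ : ℕ, ∀ N ≥ N₀,
    ∀ R : Finset (Fin m → Fin N), c * (N : ℝ) ^ m ≤ #R →
      ∃ A : Fin m → Finset (Fin N), (∀ i, #(A i) = t) ∧ ∀ φ, (∀ i, φ i ∈ A i) → φ ∈ R := by
  classical
  induction m with
  | zero =>
    intro t c hc
    refine ⟨0, fun N _ R hR => ⟨fun _ => ∅, fun i => i.elim0, fun φ _ => ?_⟩⟩
    have : 0 < #R := by
      have : (0 : ℝ) < #R := by simp at hR; linarith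
      exact_mod_cast this
    obtain ⟨ψ, hψ⟩ := card_pos.1 this
    rwa [Subsingleton.elim φ ψ]
  | succ m ih =>
    intro t c hc
    obtain ⟨K, hK⟩ := exists_nat_ge (4 * t / c + 1)
    have hK1 : (1 : ℝ) ≤ K := by
      have : 0 ≤ 4 * t / c := by positivity
      linarith
    have hKt : 4 * t ≤ K * c := by
      have : 4 * t / c ≤ K := by linarith
      rwa [div_le_iff₀ hc] at this
    obtain ⟨N₁, hN₁⟩ := ih t (c / (4 * 2 ^ K)) (by positivity)
    obtain ⟨N₂, hN₂⟩ := exists_nat_ge (2 * K / c + 1)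
    refine ⟨max N₁ N₂, fun N hN R hR => ?_⟩
    have hN2 : 2 * K / c + 1 ≤ (N : ℝ) := hN₂.trans (by exact_mod_cast (le_max_right _ _).trans hN)
    have hNK : 2 * K ≤ N * c := by
      have : 2 * K / c ≤ N := by linarith
      rwa [div_le_iff₀ hc] at this
    have hN0 : (0 : ℝ) < N := by
      have : 0 ≤ 2 * K / c := by positivity
      linarith
    have hNm : (0 : ℝ) < (N : ℝ) ^ m := by positivity
    -- the tails extending a given first coordinate
    let F : Fin N → Finset (Fin m → Fin N) := fun a => {ψ | (Fin.cons a ψ : Fin (m + 1) → Fin N) ∈ R}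
    have hRsum : (#R : ℝ) = ∑ a, (#(F a) : ℝ) := by
      have h1 : #R = ∑ a, #{φ ∈ R | φ 0 = a} :=
        card_eq_sum_card_fiberwise (fun x _ => mem_coe.2 (mem_univ (x 0)))
      rw [h1]
      push_cast
      apply sum_congr rfl
      intro a _
      norm_cast
      refine card_bij' (fun φ _ => Fin.tail φ) (fun ψ _ => Fin.cons a ψ) ?_ ?_ ?_ ?_
      · intro φ hφ
        simp only [mem_filter] at hφ
        simp only [F, mem_filter, mem_univ, true_and]
        rw [← hφ.2, Fin.cons_self_tail]
        exact hφ.1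
      · intro ψ hψ
        simpa [F] using hψ
      · intro φ hφ
        simp only [mem_filter] at hφ
        rw [← hφ.2, Fin.cons_self_tail]
      · intro ψ _
        simp
    have hFle : ∀ a, (#(F a) : ℝ) ≤ (N : ℝ) ^ m := by
      intro a
      have := card_le_univ (F a)
      simp only [Fintype.card_pi, Fintype.card_fin, prod_const, card_univ] at this
      exact_mod_cast this
    let S : Finset (Fin N) := {a | c / 2 * (N : ℝ) ^ m ≤ #(F a)}
    have hS : (K : ℝ) ≤ #S := by
      have h1 : (#R : ℝ) ≤ #S * (N : ℝ) ^ m + N * (c / 2 * (N : ℝ) ^ m) := by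
        rw [hRsum, ← sum_filter_add_sum_filter_not univ (fun a => c / 2 * (N : ℝ) ^ m ≤ #(F a))]
        apply add_le_add
        · rw [← nsmul_eq_mul]
          exact sum_le_card_nsmul _ _ _ (fun a _ => hFle a)
        · refine (sum_le_card_nsmul _ _ (c / 2 * (N : ℝ) ^ m) (fun a ha => ?_)).trans ?_
          · simp only [mem_filter, mem_univ, true_and, not_le] at ha
            exact ha.le
          · rw [nsmul_eq_mul]
            gcongr
            exact (card_le_univ _).trans_eq (Fintype.card_fin N)
      have h2 : (N : ℝ) ^ m * (K : ℝ) ≤ (N : ℝ) ^ m * #S := by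
        rw [pow_succ] at hR
        have := mul_le_mul_of_nonneg_left hNK hNm.le
        linarith
      exact le_of_mul_le_mul_left h2 hNm
    obtain ⟨W, hWS, hWK⟩ := exists_subset_card_eq (s := S) (n := K) (by exact_mod_cast hS)
    let G : (Fin m → Fin N) → Finset (Fin N) := fun ψ => {a ∈ W | (Fin.cons a ψ : Fin (m + 1) → Fin N) ∈ R}
    have hGW : ∀ ψ, G ψ ⊆ W := fun ψ => filter_subset _ _
    have hdouble : ∑ a ∈ W, (#(F a) : ℝ) = ∑ ψ, (#(G ψ) : ℝ) := by
      norm_cast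
      simp only [F, G, card_filter]
      rw [sum_comm]
    have hlow : (K : ℝ) * (c / 2 * (N : ℝ) ^ m) ≤ ∑ ψ, (#(G ψ) : ℝ) := by
      rw [← hdouble, ← hWK, ← nsmul_eq_mul]
      apply card_nsmul_le_sum
      intro a ha
      have := hWS ha
      simp only [S, mem_filter] at this
      exact this.2
    let Ψ : Finset (Fin m → Fin N) := {ψ | t ≤ #(G ψ)}
    have hΨ : c / 4 * (N : ℝ) ^ m ≤ #Ψ := by
      have h1 : ∑ ψ, (#(G ψ) : ℝ) ≤ #Ψ * K + (N : ℝ) ^ m * t := by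
        rw [← sum_filter_add_sum_filter_not univ (fun ψ => t ≤ #(G ψ))]
        apply add_le_add
        · rw [← nsmul_eq_mul]
          refine sum_le_card_nsmul _ _ _ (fun ψ _ => ?_)
          rw [← hWK]
          exact_mod_cast card_le_card (hGW ψ)
        · refine (sum_le_card_nsmul _ _ (t : ℝ) (fun ψ hψ => ?_)).trans ?_
          · simp only [mem_filter, mem_univ, true_and, not_le] at hψ
            exact_mod_cast hψ.le
          · rw [nsmul_eq_mul]
            gcongr
            have := card_le_univ (univ.filter fun ψ => ¬ t ≤ #(G ψ))
            simp only [Fintype.card_pi, Fintype.card_fin, prod_const, card_univ] at this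
            exact_mod_cast this
      have h2 : (K : ℝ) * (c / 4 * (N : ℝ) ^ m) ≤ K * #Ψ := by
        have := mul_le_mul_of_nonneg_left hKt hNm.le
        linarith
      exact le_of_mul_le_mul_left h2 (by linarith)
    have hch : ∀ ψ ∈ Ψ, ∃ T ⊆ G ψ, #T = t := by
      intro ψ hψ
      simp only [Ψ, mem_filter, mem_univ, true_and] at hψ
      exact exists_subset_card_eq hψ
    choose! T hTG hTt using hch
    have hmaps : ∀ ψ ∈ Ψ, T ψ ∈ W.powerset :=
      fun ψ hψ => mem_powerset.2 ((hTG ψ hψ).trans (hGW ψ))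
    obtain ⟨T₀, -, hT₀⟩ := exists_le_card_fiber_of_nsmul_le_card_of_maps_to
      (b := c / (4 * 2 ^ K) * (N : ℝ) ^ m) hmaps ⟨∅, empty_mem_powerset _⟩ (by
        rw [card_powerset, hWK, nsmul_eq_mul]
        refine le_trans (le_of_eq ?_) hΨ
        push_cast
        field_simp)
    obtain ⟨A, hA, hAR⟩ := hN₁ N ((le_max_left _ _).trans hN) _ hT₀
    have hm0 : 0 < #{ψ ∈ Ψ | T ψ = T₀} := by
      have : (0 : ℝ) < #{ψ ∈ Ψ | T ψ = T₀} := lt_of_lt_of_le (by positivity) hT₀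
      exact_mod_cast this
    refine ⟨Fin.cons T₀ A, ?_, ?_⟩
    · intro i
      refine Fin.cases ?_ (fun i => ?_) i
      · obtain ⟨ψ, hψ⟩ := card_pos.1 hm0
        simp only [mem_filter] at hψ
        simp only [Fin.cons_zero]
        rw [← hψ.2]
        exact hTt ψ hψ.1
      · simpa using hA i
    · intro φ hφ
      have h0 := hφ 0
      have h1 := hAR (Fin.tail φ) (fun i => by simpa [Fin.tail] using hφ i.succ)
      simp only [mem_filter] at h1
      simp only [Fin.cons_zero] at h0
      rw [← h1.2] at h0
      have := hTG _ h1.1 h0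
      simp only [G, mem_filter] at this
      simpa using this.2

/-! ### Random samples of blocks: variance of the sampled degrees -/

/-- Resampling one coordinate of a uniformly random `φ` leaves it uniformly random. -/
lemma sum_resample {m N : ℕ} (F : (Fin m → Fin N) → ℝ) (k : Fin m) :
    ∑ φ, ∑ a, F (Function.update φ k a) = N * ∑ φ, F φ := by
  have h : ∑ p : (Fin m → Fin N) × Fin N, F (Function.update p.1 k p.2) =
      ∑ p : (Fin m → Fin N) × Fin N, F p.1 := by
    refine Fintype.sum_bijective (fun p => (Function.update p.1 k p.2, p.1 k)) ?_ _ _ (fun _ => rfl)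
    apply Function.Involutive.bijective
    intro p
    simp
  rw [Fintype.sum_prod_type, Fintype.sum_prod_type] at h
  rw [h, mul_sum]
  simp

/-- The ordered pairs of distinct indices avoiding `i` and `j`. -/
def freePairs {m : ℕ} (i j : Fin m) : Finset (Fin m × Fin m) :=
  {p | p.1 ≠ p.2 ∧ p.1 ≠ i ∧ p.1 ≠ j ∧ p.2 ≠ i ∧ p.2 ≠ j}

lemma card_fst_eq {m : ℕ} (k : Fin m) : #{p : Fin m × Fin m | p.1 = k} ≤ m := by
  refine (card_le_card_of_injOn Prod.snd (t := univ) (fun _ _ => mem_coe.2 (mem_univ _)) ?_).trans_eq (by simp)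
  rintro ⟨a, b⟩ h ⟨c, d⟩ h' h2
  simp at h h' h2
  simp [h, h', h2]

lemma card_snd_eq {m : ℕ} (k : Fin m) : #{p : Fin m × Fin m | p.2 = k} ≤ m := by
  refine (card_le_card_of_injOn Prod.fst (t := univ) (fun _ _ => mem_coe.2 (mem_univ _)) ?_).trans_eq (by simp)
  rintro ⟨a, b⟩ h ⟨c, d⟩ h' h2
  simp at h h' h2
  simp [h, h', h2]

lemma card_freePairs {m : ℕ} (i j : Fin m) :
    (m : ℝ) ^ 2 - 5 * m ≤ #(freePairs i j) ∧ (#(freePairs i j) : ℝ) ≤ (m : ℝ) ^ 2 := by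
  constructor
  · have hsub : (univ : Finset (Fin m × Fin m)) ⊆ freePairs i j ∪ ((univ.filter fun p : Fin m × Fin m => p.1 = p.2) ∪
        ((univ.filter fun p : Fin m × Fin m => p.1 = i) ∪ ((univ.filter fun p : Fin m × Fin m => p.1 = j) ∪ ((univ.filter fun p : Fin m × Fin m => p.2 = i) ∪ (univ.filter fun p : Fin m × Fin m => p.2 = j))))) := by
      intro p _
      simp only [freePairs, mem_union, mem_filter, mem_univ, true_and]
      tauto
    have hdiag : #{p : Fin m × Fin m | p.1 = p.2} ≤ m := by
      refine (card_le_card_of_injOn Prod.snd (t := univ) (fun _ _ => mem_coe.2 (mem_univ _)) ?_).trans_eq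
        (by simp)
      rintro ⟨a, b⟩ h ⟨c, d⟩ h' h2
      simp at h h' h2
      simp [h, h', h2]
    have h := card_le_card hsub
    have h1 := h.trans (card_union_le _ _)
    have h2 := card_union_le (univ.filter fun p : Fin m × Fin m => p.1 = p.2)
      ((univ.filter fun p : Fin m × Fin m => p.1 = i) ∪ ((univ.filter fun p : Fin m × Fin m => p.1 = j) ∪ ((univ.filter fun p : Fin m × Fin m => p.2 = i) ∪ (univ.filter fun p : Fin m × Fin m => p.2 = j))))
    have h3 := card_union_le (univ.filter fun p : Fin m × Fin m => p.1 = i)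
      ((univ.filter fun p : Fin m × Fin m => p.1 = j) ∪ ((univ.filter fun p : Fin m × Fin m => p.2 = i) ∪ (univ.filter fun p : Fin m × Fin m => p.2 = j)))
    have h4 := card_union_le (univ.filter fun p : Fin m × Fin m => p.1 = j) ((univ.filter fun p : Fin m × Fin m => p.2 = i) ∪ (univ.filter fun p : Fin m × Fin m => p.2 = j))
    have h5 := card_union_le (univ.filter fun p : Fin m × Fin m => p.2 = i) (univ.filter fun p : Fin m × Fin m => p.2 = j)
    have a1 := card_fst_eq i
    have a2 := card_fst_eq j
    have a3 := card_snd_eq i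
    have a4 := card_snd_eq j
    have hu : #(univ : Finset (Fin m × Fin m)) = m * m := by simp
    rw [hu] at h1
    have : m * m ≤ #(freePairs i j) + 5 * m := by omega
    have : (m * m : ℝ) ≤ #(freePairs i j) + 5 * m := by exact_mod_cast this
    linarith
  · have := card_le_univ (freePairs i j)
    simp only [Fintype.card_prod, Fintype.card_fin] at this
    rw [sq]
    exact_mod_cast this

/-- The terms of index pairs `p` and `p'` with no common entry are uncorrelated, since resampling the
coordinates of `p` averages the first factor to zero while fixing the second. -/
lemma sum_orthogonal {m N : ℕ} (hN : 0 < N) (Y : Fin N → Fin N → Fin N → Fin N → ℝ)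
    (hY0 : ∀ a b, ∑ c, ∑ d, Y a b c d = 0) (i j : Fin m) (p p' : Fin m × Fin m)
    (hp : p ∈ freePairs i j)
    (hd : ¬ (p'.1 = p.1 ∨ p'.1 = p.2 ∨ p'.2 = p.1 ∨ p'.2 = p.2)) :
    ∑ φ : Fin m → Fin N, Y (φ i) (φ j) (φ p.1) (φ p.2) * Y (φ i) (φ j) (φ p'.1) (φ p'.2) = 0 := by
  obtain ⟨k, l⟩ := p
  obtain ⟨k', l'⟩ := p'
  simp only [freePairs, mem_filter, mem_univ, true_and] at hp
  simp only [not_or] at hd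
  obtain ⟨hkl, hki, hkj, hli, hlj⟩ := hp
  obtain ⟨h1, h2, h3, h4⟩ := hd
  have hN' : (N : ℝ) ≠ 0 := by positivity
  have e1 := sum_resample (fun φ : Fin m → Fin N =>
    Y (φ i) (φ j) (φ k) (φ l) * Y (φ i) (φ j) (φ k') (φ l')) k
  have e2 := sum_resample (fun φ : Fin m → Fin N => ∑ a,
    Y (φ i) (φ j) a (φ l) * Y (φ i) (φ j) (φ k') (φ l')) l
  simp only [Function.update_self, Function.update_of_ne hki.symm, Function.update_of_ne hkj.symm,
    Function.update_of_ne hkl.symm, Function.update_of_ne h1, Function.update_of_ne h3] at e1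
  simp only [Function.update_self, Function.update_of_ne hli.symm, Function.update_of_ne hlj.symm,
    Function.update_of_ne h2, Function.update_of_ne h4] at e2
  rw [e1] at e2
  have : ∀ φ : Fin m → Fin N, ∑ b, ∑ a, Y (φ i) (φ j) a b * Y (φ i) (φ j) (φ k') (φ l') = 0 := by
    intro φ
    rw [sum_comm]
    simp only [← sum_mul]
    rw [hY0, zero_mul]
  simp only [this, sum_const_zero] at e2
  have := e2.symm
  simpa [hN'] using this

/-- Second moment bound: at most `4 * m` pairs share an entry with a given pair, and by `sum_orthogonal`
only these contribute. -/
lemma sum_sq_le {m N : ℕ} (hN : 0 < N) (Y : Fin N → Fin N → Fin N → Fin N → ℝ)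
    (hY0 : ∀ a b, ∑ c, ∑ d, Y a b c d = 0) (hY : ∀ a b c d, |Y a b c d| ≤ 9) (i j : Fin m) :
    ∑ φ : Fin m → Fin N, (∑ p ∈ freePairs i j, Y (φ i) (φ j) (φ p.1) (φ p.2)) ^ 2 ≤
      324 * (m : ℝ) ^ 3 * (N : ℝ) ^ m := by
  have hone : ∀ p ∈ freePairs i j, ∑ p' ∈ freePairs i j, ∑ φ : Fin m → Fin N,
      Y (φ i) (φ j) (φ p.1) (φ p.2) * Y (φ i) (φ j) (φ p'.1) (φ p'.2) ≤
        4 * m * (81 * (N : ℝ) ^ m) := by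
    intro p hp
    have hterm : ∀ p' ∈ freePairs i j, ∑ φ : Fin m → Fin N,
        Y (φ i) (φ j) (φ p.1) (φ p.2) * Y (φ i) (φ j) (φ p'.1) (φ p'.2) ≤
        if (p'.1 = p.1 ∨ p'.1 = p.2 ∨ p'.2 = p.1 ∨ p'.2 = p.2) then 81 * (N : ℝ) ^ m else 0 := by
      intro p' _
      split_ifs with hd
      · refine (sum_le_card_nsmul _ _ 81 (fun φ _ => ?_)).trans_eq ?_
        · refine (le_abs_self _).trans ?_
          rw [abs_mul]
          refine (mul_le_mul (hY _ _ _ _) (hY _ _ _ _) (abs_nonneg _) (by norm_num)).trans_eq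
            (by norm_num)
        · simp [mul_comm]
      · exact (sum_orthogonal hN Y hY0 i j p p' hp hd).le
    refine (sum_le_sum hterm).trans ?_
    rw [← sum_filter, sum_const, nsmul_eq_mul]
    gcongr
    have hsub : {p' ∈ freePairs i j | p'.1 = p.1 ∨ p'.1 = p.2 ∨ p'.2 = p.1 ∨ p'.2 = p.2} ⊆
        ((univ.filter fun p' : Fin m × Fin m => p'.1 = p.1) ∪ ((univ.filter fun p' : Fin m × Fin m => p'.1 = p.2) ∪ ((univ.filter fun p' : Fin m × Fin m => p'.2 = p.1) ∪ (univ.filter fun p' : Fin m × Fin m => p'.2 = p.2))) :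
          Finset (Fin m × Fin m)) := by
      intro p' hp'
      simp only [mem_union, mem_filter, mem_univ, true_and] at hp' ⊢
      exact hp'.2
    have h1 := (card_le_card hsub).trans (card_union_le _ _)
    have h3 := card_union_le (univ.filter fun p' : Fin m × Fin m => p'.1 = p.2)
      ((univ.filter fun p' : Fin m × Fin m => p'.2 = p.1) ∪ (univ.filter fun p' : Fin m × Fin m => p'.2 = p.2))
    have h4 := card_union_le (univ.filter fun p' : Fin m × Fin m => p'.2 = p.1) (univ.filter fun p' : Fin m × Fin m => p'.2 = p.2)
    have a1 := card_fst_eq p.1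
    have a2 := card_fst_eq p.2
    have a3 := card_snd_eq p.1
    have a4 := card_snd_eq p.2
    have : #{p' ∈ freePairs i j | p'.1 = p.1 ∨ p'.1 = p.2 ∨ p'.2 = p.1 ∨ p'.2 = p.2} ≤ 4 * m := by
      omega
    exact_mod_cast this
  calc ∑ φ : Fin m → Fin N, (∑ p ∈ freePairs i j, Y (φ i) (φ j) (φ p.1) (φ p.2)) ^ 2
      = ∑ p ∈ freePairs i j, ∑ p' ∈ freePairs i j, ∑ φ : Fin m → Fin N,
          Y (φ i) (φ j) (φ p.1) (φ p.2) * Y (φ i) (φ j) (φ p'.1) (φ p'.2) := by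
        simp only [sq, sum_mul_sum]
        rw [sum_comm]
        apply sum_congr rfl
        intro p _
        rw [sum_comm]
    _ ≤ #(freePairs i j) * (4 * m * (81 * (N : ℝ) ^ m)) := by
        rw [← nsmul_eq_mul]
        exact sum_le_card_nsmul _ _ _ hone
    _ ≤ (m : ℝ) ^ 2 * (4 * m * (81 * (N : ℝ) ^ m)) := by
        gcongr
        exact (card_freePairs i j).2
    _ = 324 * (m : ℝ) ^ 3 * (N : ℝ) ^ m := by ring

/-- The hypergraph induced on a sample `φ` of `m` blocks out of `N`. In `E u a b c` the vertex `u` is in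
the singleton class and `a`, `b`, `c` are in the other class, where `(k, x)` stands for the vertex number
`x` of block `k`. Only edges whose four vertices have distinct indices are kept. -/
def sampRel {m N : ℕ} (E : Fin N → Fin N × Fin 3 → Fin N × Fin 3 → Fin N × Fin 3 → Prop)
    (φ : Fin m → Fin N) (i : Fin m) (v₁ v₂ v₃ : Fin m × Fin 3) : Prop :=
  (i ≠ v₁.1 ∧ i ≠ v₂.1 ∧ i ≠ v₃.1 ∧ v₁.1 ≠ v₂.1 ∧ v₁.1 ≠ v₃.1 ∧ v₂.1 ≠ v₃.1) ∧
    E (φ i) (φ v₁.1, v₁.2) (φ v₂.1, v₂.2) (φ v₃.1, v₃.2)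

/-- The link degree of `v` with respect to `u`, divided by `N²`; it lies between `0` and `9`. -/
noncomputable def normDeg {N : ℕ}
    (E : Fin N → Fin N × Fin 3 → Fin N × Fin 3 → Fin N × Fin 3 → Prop)
    (u : Fin N) (v : Fin N × Fin 3) : ℝ :=
  linkDeg univ (E u) v / (N : ℝ) ^ 2

open Classical in
/-- The number of edges at `a` and `(b, x)` whose remaining vertices lie in blocks `c` and `d`, in this
order. -/
noncomputable def blockDeg {N : ℕ}
    (E : Fin N → Fin N × Fin 3 → Fin N × Fin 3 → Fin N × Fin 3 → Prop) (x : Fin 3)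
    (a b c d : Fin N) : ℝ :=
  ∑ y : Fin 3, ∑ z : Fin 3, if E a (b, x) (c, y) (d, z) then 1 else 0

lemma blockDeg_bounds {N : ℕ}
    (E : Fin N → Fin N × Fin 3 → Fin N × Fin 3 → Fin N × Fin 3 → Prop) (x : Fin 3)
    (a b c d : Fin N) : 0 ≤ blockDeg E x a b c d ∧ blockDeg E x a b c d ≤ 9 := by
  classical
  constructor
  · exact sum_nonneg fun y _ => sum_nonneg fun z _ => by split_ifs <;> norm_num
  · calc blockDeg E x a b c d ≤ ∑ y : Fin 3, ∑ z : Fin 3, (1 : ℝ) :=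
        sum_le_sum fun y _ => sum_le_sum fun z _ => by split_ifs <;> norm_num
      _ = 9 := by norm_num

lemma sum_blockDeg {N : ℕ}
    (E : Fin N → Fin N × Fin 3 → Fin N × Fin 3 → Fin N × Fin 3 → Prop) (x : Fin 3)
    (a b : Fin N) : ∑ c, ∑ d, blockDeg E x a b c d = linkDeg univ (E a) (b, x) := by
  classical
  simp only [linkDeg, blockDeg, card_filter, univ_product_univ, Fintype.sum_prod_type]
  push_cast
  apply sum_congr rfl
  intro c _
  rw [sum_comm]

lemma linkDeg_sampRel {m N : ℕ}
    (E : Fin N → Fin N × Fin 3 → Fin N × Fin 3 → Fin N × Fin 3 → Prop)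
    (φ : Fin m → Fin N) (i j : Fin m) (hij : i ≠ j) (x : Fin 3) :
    (linkDeg univ (sampRel E φ i) (j, x) : ℝ) =
      ∑ p ∈ freePairs i j, blockDeg E x (φ i) (φ j) (φ p.1) (φ p.2) := by
  classical
  simp only [linkDeg, blockDeg, card_filter, univ_product_univ, freePairs, sum_filter,
    Fintype.sum_prod_type]
  push_cast
  apply sum_congr rfl
  intro k _
  rw [sum_comm]
  apply sum_congr rfl
  intro l _
  split_ifs with h
  · apply sum_congr rfl
    intro y _
    apply sum_congr rfl
    intro z _
    simp only [sampRel]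
    congr 1
    simp only [eq_iff_iff, and_iff_right_iff_imp]
    intro _
    exact ⟨hij, h.2.1.symm, h.2.2.2.1.symm, h.2.2.1.symm, h.2.2.2.2.symm, h.1⟩
  · apply sum_eq_zero
    intro y _
    apply sum_eq_zero
    intro z _
    rw [if_neg]
    rintro ⟨⟨-, h1, h2, h3, h4, h5⟩, -⟩
    exact h ⟨h5, h1.symm, h3.symm, h2.symm, h4.symm⟩

lemma normDeg_bounds {N : ℕ}
    (E : Fin N → Fin N × Fin 3 → Fin N × Fin 3 → Fin N × Fin 3 → Prop)
    (u : Fin N) (v : Fin N × Fin 3) : 0 ≤ normDeg E u v ∧ normDeg E u v ≤ 9 := by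
  have hN : 0 < N := u.pos
  obtain ⟨b, x⟩ := v
  have hN' : (0 : ℝ) < (N : ℝ) ^ 2 := by positivity
  rw [normDeg, ← sum_blockDeg, div_le_iff₀ hN']
  constructor
  · exact div_nonneg (sum_nonneg fun c _ => sum_nonneg fun d _ => (blockDeg_bounds E x u b c d).1) hN'.le
  · calc ∑ c, ∑ d, blockDeg E x u b c d ≤ ∑ c : Fin N, ∑ d : Fin N, (9 : ℝ) :=
        sum_le_sum fun y _ => sum_le_sum fun z _ => (blockDeg_bounds E x u b _ _).2
      _ = 9 * (N : ℝ) ^ 2 := by simp; ring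

/-- The sampled link degree of `(j, x)` at `i` concentrates around `|freePairs i j|` times the normalised
degree of its image. -/
lemma sample_variance {m N : ℕ} (hN : 0 < N)
    (E : Fin N → Fin N × Fin 3 → Fin N × Fin 3 → Fin N × Fin 3 → Prop)
    (i j : Fin m) (hij : i ≠ j) (x : Fin 3) :
    ∑ φ : Fin m → Fin N, ((linkDeg univ (sampRel E φ i) (j, x) : ℝ) -
      #(freePairs i j) * normDeg E (φ i) (φ j, x)) ^ 2 ≤ 324 * (m : ℝ) ^ 3 * (N : ℝ) ^ m := by
  have hN' : (N : ℝ) ≠ 0 := by positivity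
  refine le_trans (le_of_eq ?_) (sum_sq_le hN
    (fun a b c d => blockDeg E x a b c d - normDeg E a (b, x)) ?_ ?_ i j)
  · apply sum_congr rfl
    intro φ _
    rw [linkDeg_sampRel E φ i j hij x, sum_sub_distrib, sum_const, nsmul_eq_mul]
  · intro a b
    simp only [sum_sub_distrib, sum_blockDeg, sum_const, card_univ, Fintype.card_fin, nsmul_eq_mul,
      normDeg]
    field_simp
    ring
  · intro a b c d
    have h1 := blockDeg_bounds E x a b c d
    have h2 := normDeg_bounds E a (b, x)
    rw [abs_le]
    constructor <;> linarith

/-! ### Fractional matchings of a sample -/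

lemma linkDeg_univ_le {α : Type*} [Fintype α] [DecidableEq α] (V : Finset α)
    (E : α → α → α → Prop) (x : α) :
    linkDeg univ E x ≤ linkDeg V E x + 2 * (#Vᶜ * Fintype.card α) := by
  classical
  simp only [linkDeg]
  have hsub : (univ ×ˢ univ : Finset (α × α)).filter (fun p => E x p.1 p.2) ⊆
      (V ×ˢ V).filter (fun p => E x p.1 p.2) ∪ (Vᶜ ×ˢ univ ∪ univ ×ˢ Vᶜ) := by
    intro p hp
    simp only [mem_union, mem_filter, mem_product, mem_univ, mem_compl, true_and, and_true] at hp ⊢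
    tauto
  have h1 := (card_le_card hsub).trans (card_union_le _ _)
  have h2 := card_union_le (Vᶜ ×ˢ (univ : Finset α)) (univ ×ˢ Vᶜ)
  simp only [card_product, card_univ] at h2
  rw [Nat.mul_comm (Fintype.card α)] at h2
  rw [← two_mul] at h2
  convert h1.trans (Nat.add_le_add_left h2 _)

/-- An almost perfect fractional matching in the link `τ` of one index `i`. The number `μ v` is the
expected normalised degree of `v`, and `B` contains the vertices whose degree falls short of it. The
Ore-type condition survives on the complement of `B` and of the block of `i`, so that `frac_ore`
applies there. -/
lemma frac_sample_one {m : ℕ} (ε δ : ℝ) (hε : 0 < ε) (hδ : 6 * ε ≤ δ) (hε1 : ε ≤ 1 / 10)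
    (hm : 1 ≤ ε * m) (i : Fin m)
    (τ : Fin m × Fin 3 → Fin m × Fin 3 → Fin m × Fin 3 → Prop)
    (h12 : ∀ a b c, τ a b c → τ b a c) (h23 : ∀ a b c, τ a b c → τ a c b)
    (hdist : ∀ a b c, τ a b c → i ≠ a.1 ∧ i ≠ b.1 ∧ i ≠ c.1 ∧
      a.1 ≠ b.1 ∧ a.1 ≠ c.1 ∧ b.1 ≠ c.1)
    (μ : Fin m × Fin 3 → ℝ) (hore : ∀ a b c, τ a b c → 12 + 9 * δ ≤ μ a + μ b)
    (hmin : ∀ v, i ≠ v.1 → 3 ≤ μ v)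
    (B : Finset (Fin m × Fin 3))
    (hB : ∀ v, i ≠ v.1 → v ∉ B → (μ v - ε) * (m : ℝ) ^ 2 ≤ linkDeg univ τ v)
    (hcard : (#B : ℝ) ≤ ε * m) :
    ∃ f : Finset (Fin m × Fin 3) → ℝ, (∀ s, 0 ≤ f s) ∧
      (∀ s, f s ≠ 0 → ∃ a b c, τ a b c ∧ s = {a, b, c}) ∧
      (1 - 4 / 3 * ε) * m ≤ ∑ s, f s ∧ (∑ s, f s ≤ m) ∧ ∀ v, ∑ s with v ∈ s, f s ≤ 1 := by
  classical
  have hm0 : (0 : ℝ) < m := by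
    rcases Nat.eq_zero_or_pos m with h | h
    · subst h; norm_num at hm
    · exact_mod_cast h
  set V : Finset (Fin m × Fin 3) := {v | i ≠ v.1 ∧ v ∉ B} with hV
  have hVc : (#Vᶜ : ℝ) ≤ 3 + ε * m := by
    have hsub : Vᶜ ⊆ ({i} ×ˢ univ) ∪ B := by
      intro v hv
      simp only [hV, mem_compl, mem_filter, mem_univ, true_and, mem_union, mem_product,
        mem_singleton, and_true] at hv ⊢
      by_contra h
      push Not at h
      exact hv ⟨fun h' => h.1 h'.symm, h.2⟩
    have h := (card_le_card hsub).trans (card_union_le _ _)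
    simp only [card_product, card_singleton, card_univ, Fintype.card_fin, one_mul] at h
    have h' : (#Vᶜ : ℝ) ≤ 3 + #B := by exact_mod_cast h
    linarith
  have hVcard : (#V : ℝ) + #Vᶜ = 3 * m := by
    have := card_add_card_compl V
    simp only [Fintype.card_prod, Fintype.card_fin] at this
    have h : ((#V + #Vᶜ : ℕ) : ℝ) = ((m * 3 : ℕ) : ℝ) := by rw [this]
    push_cast at h
    linarith
  have hdeg : ∀ v ∈ V, (μ v - 25 * ε) * (m : ℝ) ^ 2 ≤ linkDeg V τ v := by
    intro v hv
    have hv' : i ≠ v.1 ∧ v ∉ B := by simpa [hV] using hv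
    have h1 := hB v hv'.1 hv'.2
    have h2 : (linkDeg univ τ v : ℝ) ≤ linkDeg V τ v + 2 * (#Vᶜ * (m * 3)) := by
      have := linkDeg_univ_le V τ v
      simp only [Fintype.card_prod, Fintype.card_fin] at this
      exact_mod_cast this
    have h3 : (#Vᶜ : ℝ) * (m * 3) ≤ (4 * (ε * m)) * (m * 3) := by
      gcongr
      linarith
    nlinarith
  obtain ⟨f, hf0, hfs, hfsum, hfv⟩ := frac_ore V τ h12 h23
    (fun x y z h hxy => (hdist x y z h).2.2.2.1 (by rw [hxy]))
    (by
      intro x hx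
      have h1 := hdeg x hx
      have hx' : i ≠ x.1 ∧ x ∉ B := by simpa [hV] using hx
      have h2 := hmin x hx'.1
      have h3 : (0 : ℝ) < linkDeg V τ x := by
        refine lt_of_lt_of_le ?_ h1
        have : 0 < μ x - 25 * ε := by linarith
        positivity
      have h4 : 0 < linkDeg V τ x := by exact_mod_cast h3
      rw [linkDeg, card_pos] at h4
      obtain ⟨p, hp⟩ := h4
      simp only [mem_filter, mem_product] at hp
      exact ⟨p.1, hp.1.1, p.2, hp.1.2, hp.2⟩)
    (by
      intro x hx y hy z hz h
      have h1 := hdeg x hx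
      have h2 := hdeg y hy
      have h3 := hore x y z h
      have h4 : (#V : ℝ) ≤ 3 * m := by
        have : (0 : ℝ) ≤ #Vᶜ := by positivity
        linarith
      have h5 : (#V : ℝ) ^ 2 ≤ (3 * m) ^ 2 := by gcongr
      have h6 : (12 + 9 * δ) * (m : ℝ) ^ 2 ≤ (μ x + μ y) * (m : ℝ) ^ 2 := by gcongr
      have h7 : 0 < (9 * δ - 50 * ε) * (m : ℝ) ^ 2 := by
        have : 0 < 9 * δ - 50 * ε := by linarith
        positivity
      nlinarith)
  refine ⟨f, hf0, hfs, by linarith, ?_, hfv⟩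
  have hthree : 3 * ∑ s, f s = ∑ v : Fin m × Fin 3, ∑ s with v ∈ s, f s := by
    simp only [sum_filter]
    rw [sum_comm, mul_sum]
    apply sum_congr rfl
    intro s _
    rw [← sum_filter, sum_const, nsmul_eq_mul]
    by_cases h : f s = 0
    · simp [h]
    · obtain ⟨a, b, c, hτ, rfl⟩ := hfs s h
      obtain ⟨-, -, -, h1, h2, h3⟩ := hdist a b c hτ
      have : #({v | v ∈ ({a, b, c} : Finset (Fin m × Fin 3))} : Finset (Fin m × Fin 3)) = 3 := by
        rw [filter_mem_eq_inter, univ_inter, card_eq_three]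
        exact ⟨a, b, c, fun h => h1 (by rw [h]), fun h => h2 (by rw [h]),
          fun h => h3 (by rw [h]), rfl⟩
      rw [this]
      norm_num
  have : ∑ v : Fin m × Fin 3, ∑ s with v ∈ s, f s ≤ ∑ v : Fin m × Fin 3, (1 : ℝ) :=
    sum_le_sum fun v _ => hfv v
  simp only [sum_const, card_univ, Fintype.card_prod, Fintype.card_fin, nsmul_eq_mul] at this
  push_cast at this
  linarith

/-- An almost perfect fractional matching of the whole sampled 4-graph: the fractional matchings of the
links of all `i` are superposed with weight `1 / m` each. Here `B` contains the pairs `(i, v)` for which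
`v` has too small a degree at `i`; the few `i` with more than `ε * m` such `v` receive weight zero. -/
lemma frac_sample {m : ℕ} (ε δ : ℝ) (hε : 0 < ε) (hδ : 6 * ε ≤ δ) (hε1 : ε ≤ 1 / 10)
    (hm : 1 ≤ ε * m)
    (τ : Fin m → Fin m × Fin 3 → Fin m × Fin 3 → Fin m × Fin 3 → Prop)
    (h12 : ∀ i a b c, τ i a b c → τ i b a c) (h23 : ∀ i a b c, τ i a b c → τ i a c b)
    (hdist : ∀ i a b c, τ i a b c → i ≠ a.1 ∧ i ≠ b.1 ∧ i ≠ c.1 ∧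
      a.1 ≠ b.1 ∧ a.1 ≠ c.1 ∧ b.1 ≠ c.1)
    (μ : Fin m → Fin m × Fin 3 → ℝ) (hore : ∀ i a b c, τ i a b c → 12 + 9 * δ ≤ μ i a + μ i b)
    (hmin : ∀ i v, i ≠ v.1 → 3 ≤ μ i v)
    (B : Finset (Fin m × (Fin m × Fin 3)))
    (hB : ∀ i v, i ≠ v.1 → (i, v) ∉ B → (μ i v - ε) * (m : ℝ) ^ 2 ≤ linkDeg univ (τ i) v)
    (hcard : (#B : ℝ) ≤ ε ^ 2 * (m : ℝ) ^ 2) :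
    ∃ f : Fin m → Finset (Fin m × Fin 3) → ℝ, (∀ i s, 0 ≤ f i s) ∧
      (∀ i s, f i s ≠ 0 → ∃ a b c, τ i a b c ∧ s = {a, b, c}) ∧
      (∀ i, ∑ s, f i s ≤ 1) ∧ (∀ v, ∑ i, ∑ s with v ∈ s, f i s ≤ 1) ∧
      (1 - 3 * ε) * m ≤ ∑ i, ∑ s, f i s := by
  classical
  have hm0 : (0 : ℝ) < m := by
    rcases Nat.eq_zero_or_pos m with h | h
    · subst h; norm_num at hm
    · exact_mod_cast h
  -- the bad vertices seen from a fixed `i`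
  let Bi : Fin m → Finset (Fin m × Fin 3) := fun i => {v | (i, v) ∈ B}
  let G : Finset (Fin m) := {i | (#(Bi i) : ℝ) ≤ ε * m}
  have hG : (1 - ε) * m ≤ #G := by
    have h1 : (∑ i, #(Bi i)) = #B := by
      rw [card_eq_sum_card_fiberwise (f := Prod.fst) (t := univ) (fun _ _ => mem_coe.2 (mem_univ _))]
      apply sum_congr rfl
      intro i _
      refine card_bij' (fun v _ => (i, v)) (fun p _ => p.2) ?_ ?_ ?_ ?_
      · intro v hv; simpa [Bi] using hv
      · rintro ⟨j, v⟩ hv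
        simp only [mem_filter] at hv
        obtain ⟨hv, rfl⟩ := hv
        simpa [Bi] using hv
      · intro v _; rfl
      · rintro ⟨j, v⟩ hv
        simp only [mem_filter] at hv
        simp [hv.2]
    have h2 : (#Gᶜ : ℝ) * (ε * m) ≤ ∑ i, (#(Bi i) : ℝ) := by
      calc (#Gᶜ : ℝ) * (ε * m) = ∑ i ∈ Gᶜ, ε * m := by simp
        _ ≤ ∑ i ∈ Gᶜ, (#(Bi i) : ℝ) := by
            apply sum_le_sum
            intro i hi
            simp only [G, mem_compl, mem_filter, mem_univ, true_and, not_le] at hi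
            exact hi.le
        _ ≤ ∑ i, (#(Bi i) : ℝ) :=
            sum_le_sum_of_subset_of_nonneg (subset_univ _) fun _ _ _ => by positivity
    have h3 : ∑ i, (#(Bi i) : ℝ) = #B := by exact_mod_cast h1
    have h4 : (#Gᶜ : ℝ) * (ε * m) ≤ (ε * m) * (ε * m) := by
      rw [h3] at h2
      nlinarith
    have h5 : (#Gᶜ : ℝ) ≤ ε * m := le_of_mul_le_mul_right h4 (by positivity)
    have h6 : (#G : ℝ) + #Gᶜ = m := by
      have := card_add_card_compl G
      rw [Fintype.card_fin] at this
      exact_mod_cast this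
    linarith
  have hone : ∀ i : Fin m, ∃ f : Finset (Fin m × Fin 3) → ℝ, (∀ s, 0 ≤ f s) ∧
      (∀ s, f s ≠ 0 → ∃ a b c, τ i a b c ∧ s = {a, b, c}) ∧
      (i ∈ G → (1 - 4 / 3 * ε) * m ≤ ∑ s, f s) ∧ (∑ s, f s ≤ m) ∧
      ∀ v, ∑ s with v ∈ s, f s ≤ 1 := by
    intro i
    by_cases hi : i ∈ G
    · obtain ⟨f, h1, h2, h3, h4, h5⟩ := frac_sample_one ε δ hε hδ hε1 hm i (τ i) (h12 i) (h23 i)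
        (hdist i) (μ i) (hore i) (hmin i) (Bi i)
        (fun v hv hvB => hB i v hv (by simpa [Bi] using hvB)) (by simpa [G] using hi)
      exact ⟨f, h1, h2, fun _ => h3, h4, h5⟩
    · exact ⟨fun _ => 0, fun _ => le_rfl, fun s h => absurd rfl h, fun h => absurd h hi,
        by simp, fun v => by simp⟩
  choose f hf0 hfs hfG hfm hfv using hone
  refine ⟨fun i s => f i s / m, fun i s => div_nonneg (hf0 i s) hm0.le, ?_, ?_, ?_, ?_⟩
  · intro i s h
    exact hfs i s fun h' => h (by simp [h'])
  · intro i
    rw [← sum_div, div_le_one hm0]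
    exact hfm i
  · intro v
    calc ∑ i, ∑ s with v ∈ s, f i s / m ≤ ∑ i : Fin m, (1 : ℝ) / m := by
          apply sum_le_sum
          intro i _
          rw [← sum_div]
          gcongr
          exact hfv i v
      _ = 1 := by simp [hm0.ne']
  · calc (1 - 3 * ε) * m ≤ ((1 - ε) * m) * (1 - 4 / 3 * ε) := by nlinarith
      _ ≤ #G * (1 - 4 / 3 * ε) := by
          gcongr
          linarith
      _ = ∑ i ∈ G, (1 - 4 / 3 * ε) := by rw [sum_const, nsmul_eq_mul]
      _ ≤ ∑ i ∈ G, ∑ s, f i s / m := by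
          apply sum_le_sum
          intro i hi
          rw [← sum_div, le_div_iff₀ hm0]
          exact hfG i hi
      _ ≤ ∑ i, ∑ s, f i s / m :=
          sum_le_sum_of_subset_of_nonneg (subset_univ _) fun i _ _ =>
            sum_nonneg fun s _ => div_nonneg (hf0 i s) hm0.le

/-! ### Blow-ups of fractional matchings and local replacement in a matching -/

lemma exists_injOn_mapsTo {α β : Type*} [Nonempty β] (S : Finset α) (T : Finset β)
    (h : #S ≤ #T) : ∃ f : α → β, (∀ a ∈ S, f a ∈ T) ∧ Set.InjOn f S := by
  obtain ⟨f, h1, h2⟩ := Set.Finite.exists_injOn_of_encard_le (s := (S : Set α)) (t := (T : Set β))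
    S.finite_toSet (by simpa using h)
  exact ⟨f, fun a ha => by simpa using h1 ha, h2⟩

/-- If replacing the index `i` by any element of a box side `A i` of size `t` turns the edges `(i, s)`
with `c i s ≠ 0` into edges of `H`, then integral multiplicities `c` of vertex loads at most `t` are
realised by a matching of `H`: at each index, the copies of edges using it are assigned distinct elements
of the box side. -/
lemma blowup_matching {P : Type*} [DecidableEq P] {m N t : ℕ} (hN : 0 < N)
    (H : Finset (Fin N × Finset P))
    (g : Fin N × Fin 3 → P) (hg : Function.Injective g)
    (A : Fin m → Finset (Fin N)) (hA : ∀ i, #(A i) = t)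
    (hdisj : ∀ i j, i ≠ j → Disjoint (A i) (A j))
    (c : Fin m → Finset (Fin m × Fin 3) → ℕ) (hrow : ∀ i, ∑ s, c i s ≤ t)
    (hcol : ∀ v, ∑ i, ∑ s with v ∈ s, c i s ≤ t)
    (hH : ∀ i s, c i s ≠ 0 → ∀ u ∈ A i, ∀ b : Fin m × Fin 3 → Fin N,
      (∀ v ∈ s, b v ∈ A v.1) → (u, s.image fun v => g (b v, v.2)) ∈ H) :
    ∃ M ⊆ H, (∀ p ∈ M, ∀ r ∈ M, p ≠ r → p.1 ≠ r.1 ∧ Disjoint p.2 r.2) ∧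
      #M = ∑ i, ∑ s, c i s ∧
      ∀ p ∈ M, (∃ i, p.1 ∈ A i) ∧ ∀ x ∈ p.2, ∃ b y, (∃ i, b ∈ A i) ∧ x = g (b, y) := by
  classical
  have : Nonempty (Fin N) := ⟨⟨0, hN⟩⟩
  let T := Σ e : Fin m × Finset (Fin m × Fin 3), Fin (c e.1 e.2)
  have hAeq : ∀ i j x, x ∈ A i → x ∈ A j → i = j := by
    intro i j x hi hj
    by_contra h
    exact disjoint_left.1 (hdisj i j h) hi hj
  have hTcard : ∀ (q : Fin m × Finset (Fin m × Fin 3) → Prop) [DecidablePred q],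
      #{τ : T | q τ.1} = ∑ e, if q e then c e.1 e.2 else 0 := by
    intro q _
    rw [card_filter, Fintype.sum_sigma]
    apply sum_congr rfl
    intro e _
    by_cases h : q e <;> simp [h]
  have hr : ∀ i, ∃ f : T → Fin N, (∀ τ ∈ ({τ : T | τ.1.1 = i} : Finset T), f τ ∈ A i) ∧
      Set.InjOn f ({τ : T | τ.1.1 = i} : Finset T) := by
    intro i
    apply exists_injOn_mapsTo
    rw [hA, hTcard (fun e => e.1 = i), Fintype.sum_prod_type]
    refine le_trans (le_of_eq ?_) (hrow i)
    rw [sum_eq_single i]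
    · simp
    · intro j _ hj
      simp [hj]
    · simp
  have hc : ∀ v, ∃ f : T → Fin N, (∀ τ ∈ ({τ : T | v ∈ τ.1.2} : Finset T), f τ ∈ A v.1) ∧
      Set.InjOn f ({τ : T | v ∈ τ.1.2} : Finset T) := by
    intro v
    apply exists_injOn_mapsTo
    rw [hA, hTcard (fun e => v ∈ e.2), Fintype.sum_prod_type]
    refine le_trans (le_of_eq ?_) (hcol v)
    simp only [sum_filter]
  choose rf hrf hrf' using hr
  choose cf hcf hcf' using hc
  let u : T → Fin N := fun τ => rf τ.1.1 τ
  have hu : ∀ τ : T, u τ ∈ A τ.1.1 := fun τ => hrf _ _ (by simp)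
  have huinj : Function.Injective u := by
    intro τ τ' h
    have h1 : τ.1.1 = τ'.1.1 := hAeq _ _ (u τ) (hu τ) (h ▸ hu τ')
    refine hrf' τ.1.1 (by simp) (by simp [h1]) ?_
    simp only [u] at h
    rw [h, h1]
  have hcfm : ∀ (τ : T) v, v ∈ τ.1.2 → cf v τ ∈ A v.1 := fun τ v hv => hcf v τ (by simpa using hv)
  let e : T → Fin N × Finset P := fun τ => (u τ, τ.1.2.image fun v => g (cf v τ, v.2))
  have heinj : Function.Injective e := fun τ τ' h => huinj (congrArg Prod.fst h)
  refine ⟨univ.image e, ?_, ?_, ?_, ?_⟩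
  · intro p hp
    obtain ⟨τ, -, rfl⟩ := mem_image.1 hp
    refine hH τ.1.1 τ.1.2 ?_ (u τ) (hu τ) (fun v => cf v τ) (hcfm τ)
    exact (Fin.pos τ.2).ne'
  · intro p hp r hr hpr
    obtain ⟨τ, -, rfl⟩ := mem_image.1 hp
    obtain ⟨τ', -, rfl⟩ := mem_image.1 hr
    have hne : τ ≠ τ' := fun h => hpr (by rw [h])
    refine ⟨fun h => hne (huinj h), ?_⟩
    rw [disjoint_left]
    intro x hx hx'
    obtain ⟨v, hv, rfl⟩ := mem_image.1 hx
    obtain ⟨v', hv', h⟩ := mem_image.1 hx'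
    have h := hg h
    simp only [Prod.mk.injEq] at h
    have h1 : v'.1 = v.1 := hAeq _ _ (cf v τ) (h.1 ▸ hcfm τ' v' hv') (hcfm τ v hv)
    have h2 : v' = v := Prod.ext h1 h.2
    subst h2
    exact hne (hcf' v' (by simpa using hv) (by simpa using hv') h.1.symm)
  · rw [card_image_of_injective _ heinj, card_univ, Fintype.card_sigma, Fintype.sum_prod_type]
    simp
  · intro p hp
    obtain ⟨τ, -, rfl⟩ := mem_image.1 hp
    refine ⟨⟨_, hu τ⟩, ?_⟩
    intro x hx
    obtain ⟨v, hv, rfl⟩ := mem_image.1 hx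
    exact ⟨_, _, ⟨_, hcfm τ v hv⟩, rfl⟩

/-- A matching `M` whose edges are blocks can be modified by deleting the blocks indexed by `W` and
inserting any matching `M'` inside the vertices of `W`. -/
lemma replace_matching {P : Type*} [DecidableEq P] {N : ℕ}
    (H : Finset (Fin N × Finset P)) (g : Fin N × Fin 3 → P) (hg : Function.Injective g)
    (M : Finset (Fin N × Finset P)) (hMH : M ⊆ H)
    (hM : ∀ p ∈ M, ∀ r ∈ M, p ≠ r → p.1 ≠ r.1 ∧ Disjoint p.2 r.2)
    (hblock : ∀ p ∈ M, ∀ x ∈ p.2, ∃ y, x = g (p.1, y))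
    (W : Finset (Fin N))
    (M' : Finset (Fin N × Finset P)) (hMH' : M' ⊆ H)
    (hM' : ∀ p ∈ M', ∀ r ∈ M', p ≠ r → p.1 ≠ r.1 ∧ Disjoint p.2 r.2)
    (hW : ∀ p ∈ M', p.1 ∈ W ∧ ∀ x ∈ p.2, ∃ b y, b ∈ W ∧ x = g (b, y)) :
    ∃ L ⊆ H, (∀ p ∈ L, ∀ r ∈ L, p ≠ r → p.1 ≠ r.1 ∧ Disjoint p.2 r.2) ∧
      #L + #{u ∈ W | ∃ p ∈ M, p.1 = u} = #M + #M' := by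
  classical
  have hcross : ∀ p ∈ M, p.1 ∉ W → ∀ r ∈ M', p.1 ≠ r.1 ∧ Disjoint p.2 r.2 := by
    intro p hp hpW r hr
    refine ⟨fun h => hpW (h ▸ (hW r hr).1), ?_⟩
    rw [disjoint_left]
    intro x hx hx'
    obtain ⟨y, rfl⟩ := hblock p hp x hx
    obtain ⟨b, y', hb, h⟩ := (hW r hr).2 _ hx'
    have := hg h
    simp only [Prod.mk.injEq] at this
    exact hpW (this.1 ▸ hb)
  refine ⟨{p ∈ M | p.1 ∉ W} ∪ M', union_subset ((filter_subset _ _).trans hMH) hMH', ?_, ?_⟩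
  · intro p hp r hr hpr
    simp only [mem_union, mem_filter] at hp hr
    rcases hp with ⟨hp, hpW⟩ | hp <;> rcases hr with ⟨hr, hrW⟩ | hr
    · exact hM p hp r hr hpr
    · exact hcross p hp hpW r hr
    · exact ⟨(hcross r hr hrW p hp).1.symm, (hcross r hr hrW p hp).2.symm⟩
    · exact hM' p hp r hr hpr
  · rw [card_union_of_disjoint]
    · have h1 : #{u ∈ W | ∃ p ∈ M, p.1 = u} = #{p ∈ M | p.1 ∈ W} := by
        symm
        refine card_bij (fun p _ => p.1) ?_ ?_ ?_
        · intro p hp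
          simp only [mem_filter] at hp ⊢
          exact ⟨hp.2, p, hp.1, rfl⟩
        · intro p hp r hr h
          simp only [mem_filter] at hp hr
          by_contra hne
          exact (hM p hp.1 r hr.1 hne).1 h
        · intro u hu
          simp only [mem_filter] at hu
          obtain ⟨hu, p, hp, rfl⟩ := hu
          exact ⟨p, mem_filter.2 ⟨hp, hu⟩, rfl⟩
      rw [h1, ← card_filter_add_card_filter_not (s := M) (fun p => p.1 ∈ W)]
      omega
    · rw [disjoint_left]
      intro p hp hp'
      simp only [mem_filter] at hp
      exact (hcross p hp.1 hp.2 p hp').1 rfl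

/-! ### Counting atypical samples -/

open Classical in
/-- The pairs `(i, v)`, with `v` outside the block of `i`, whose sampled degree falls short of its
expectation by more than `ε * m²`. -/
noncomputable def shortPairs {m N : ℕ}
    (E : Fin N → Fin N × Fin 3 → Fin N × Fin 3 → Fin N × Fin 3 → Prop) (ε : ℝ)
    (φ : Fin m → Fin N) : Finset (Fin m × (Fin m × Fin 3)) :=
  {q | q.1 ≠ q.2.1 ∧ (linkDeg univ (sampRel E φ q.1) q.2 : ℝ) <
    (normDeg E (φ q.1) (φ q.2.1, q.2.2) - ε) * (m : ℝ) ^ 2}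

/-- Chebyshev inequality for `sample_variance`, summed over all pairs `(i, v)`. The lower bound on `m`
absorbs the difference between `|freePairs i j|` and `m²`. -/
lemma sum_card_shortPairs {m N : ℕ} (hN : 0 < N)
    (E : Fin N → Fin N × Fin 3 → Fin N × Fin 3 → Fin N × Fin 3 → Prop) (ε : ℝ)
    (hε : 0 < ε) (hm : 90 ≤ ε * m) :
    (∑ φ : Fin m → Fin N, (#(shortPairs E ε φ) : ℝ)) * (ε ^ 2 * (m : ℝ) ^ 4 / 4) ≤
      972 * (m : ℝ) ^ 5 * (N : ℝ) ^ m := by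
  classical
  have hm0 : (0 : ℝ) ≤ m := by positivity
  have hpt : ∀ (φ : Fin m → Fin N) (q : Fin m × (Fin m × Fin 3)), q ∈ shortPairs E ε φ →
      ε ^ 2 * (m : ℝ) ^ 4 / 4 ≤ if q.1 ≠ q.2.1 then
        ((linkDeg univ (sampRel E φ q.1) (q.2.1, q.2.2) : ℝ) -
          #(freePairs q.1 q.2.1) * normDeg E (φ q.1) (φ q.2.1, q.2.2)) ^ 2 else 0 := by
    rintro φ ⟨i, j, x⟩ hq
    simp only [shortPairs, mem_filter, mem_univ, true_and] at hq
    obtain ⟨hij, hq⟩ := hq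
    rw [if_pos hij]
    have hμ := normDeg_bounds E (φ i) (φ j, x)
    have hfree := (card_freePairs i j).1
    set μ := normDeg E (φ i) (φ j, x)
    have h1 : ((m : ℝ) ^ 2 - 5 * m) * μ ≤ #(freePairs i j) * μ := by
      gcongr
      exact hμ.1
    have h2 : (m : ℝ) * μ ≤ m * 9 := by
      gcongr
      exact hμ.2
    have h3 : 90 * (m : ℝ) ≤ ε * m * m := by gcongr
    have h4 : ε * (m : ℝ) ^ 2 / 2 ≤ #(freePairs i j) * μ - linkDeg univ (sampRel E φ i) (j, x) := by
      nlinarith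
    have h5 : (0 : ℝ) ≤ ε * (m : ℝ) ^ 2 / 2 := by positivity
    nlinarith [pow_le_pow_left₀ h5 h4 2]
  calc (∑ φ : Fin m → Fin N, (#(shortPairs E ε φ) : ℝ)) * (ε ^ 2 * (m : ℝ) ^ 4 / 4)
      = ∑ φ : Fin m → Fin N, ∑ q ∈ shortPairs E ε φ, (ε ^ 2 * (m : ℝ) ^ 4 / 4) := by
        simp only [sum_const, nsmul_eq_mul, sum_mul]
    _ ≤ ∑ φ : Fin m → Fin N, ∑ q : Fin m × (Fin m × Fin 3), if q.1 ≠ q.2.1 then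
        ((linkDeg univ (sampRel E φ q.1) (q.2.1, q.2.2) : ℝ) -
          #(freePairs q.1 q.2.1) * normDeg E (φ q.1) (φ q.2.1, q.2.2)) ^ 2 else 0 := by
        apply sum_le_sum
        intro φ _
        refine (sum_le_sum fun q hq => hpt φ q hq).trans ?_
        refine sum_le_sum_of_subset_of_nonneg (subset_univ _) fun q _ _ => ?_
        split_ifs <;> positivity
    _ ≤ ∑ q : Fin m × (Fin m × Fin 3), 324 * (m : ℝ) ^ 3 * (N : ℝ) ^ m := by
        rw [sum_comm]
        apply sum_le_sum
        rintro ⟨i, j, x⟩ _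
        by_cases hij : i = j
        · simp only [hij, ne_eq, not_true_eq_false, if_false, sum_const_zero]
          positivity
        · simp only [ne_eq, hij, not_false_eq_true, if_true]
          exact sample_variance hN E i j hij x
    _ = 972 * (m : ℝ) ^ 5 * (N : ℝ) ^ m := by
        simp only [sum_const, card_univ, Fintype.card_prod, Fintype.card_fin, nsmul_eq_mul]
        push_cast
        ring

/-- Markov inequality for `sum_card_shortPairs`. -/
lemma card_many_short {m N : ℕ} (hN : 0 < N)
    (E : Fin N → Fin N × Fin 3 → Fin N × Fin 3 → Fin N × Fin 3 → Prop) (ε : ℝ)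
    (hε : 0 < ε) (hm : 90 ≤ ε * m) :
    (#{φ : Fin m → Fin N | ε ^ 2 * (m : ℝ) ^ 2 < #(shortPairs E ε φ)} : ℝ) * (ε ^ 4 * m) ≤
      3888 * (N : ℝ) ^ m := by
  have hm0 : (0 : ℝ) < m := by
    rcases Nat.eq_zero_or_pos m with h | h
    · subst h; norm_num at hm
    · exact_mod_cast h
  have h1 : (#{φ : Fin m → Fin N | ε ^ 2 * (m : ℝ) ^ 2 < #(shortPairs E ε φ)} : ℝ) *
      (ε ^ 2 * (m : ℝ) ^ 2) ≤ ∑ φ : Fin m → Fin N, (#(shortPairs E ε φ) : ℝ) := by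
    rw [← nsmul_eq_mul, ← sum_const]
    refine (sum_le_sum (g := fun φ => (#(shortPairs E ε φ) : ℝ)) fun φ hφ => ?_).trans
      (sum_le_sum_of_subset_of_nonneg (subset_univ _) fun _ _ _ => by positivity)
    simp only [mem_filter] at hφ
    exact hφ.2.le
  have h2 := sum_card_shortPairs hN E ε hε hm
  have h3 : 0 < (m : ℝ) ^ 5 := by positivity
  set c := (#{φ : Fin m → Fin N | ε ^ 2 * (m : ℝ) ^ 2 < #(shortPairs E ε φ)} : ℝ)
  have h4 : c * (ε ^ 2 * (m : ℝ) ^ 2) * (ε ^ 2 * (m : ℝ) ^ 4 / 4) ≤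
      972 * (m : ℝ) ^ 5 * (N : ℝ) ^ m := by
    refine le_trans ?_ h2
    gcongr
  refine le_of_mul_le_mul_right ?_ h3
  nlinarith

lemma card_not_injective {m N : ℕ} :
    (#{φ : Fin m → Fin N | ¬ Function.Injective φ} : ℝ) * N ≤ (m : ℝ) ^ 2 * (N : ℝ) ^ m := by
  classical
  have hpt : ∀ φ : Fin m → Fin N, (if ¬ Function.Injective φ then (1 : ℝ) else 0) ≤
      ∑ q : Fin m × Fin m, if q.1 ≠ q.2 ∧ φ q.1 = φ q.2 then 1 else 0 := by
    intro φ
    by_cases h : Function.Injective φ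
    · rw [if_neg (not_not.2 h)]
      exact sum_nonneg fun q _ => by split_ifs <;> norm_num
    · rw [if_pos h]
      simp only [Function.Injective] at h
      push Not at h
      obtain ⟨i, j, h1, h2⟩ := h
      refine le_trans ?_ (single_le_sum (fun q _ => ?_) (mem_univ (i, j)))
      · simp [h1, h2]
      · split_ifs <;> norm_num
  have hq : ∀ q : Fin m × Fin m,
      (N : ℝ) * ∑ φ : Fin m → Fin N, (if q.1 ≠ q.2 ∧ φ q.1 = φ q.2 then (1 : ℝ) else 0) ≤
        (N : ℝ) ^ m := by
    rintro ⟨i, j⟩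
    by_cases hij : i = j
    · simp [hij]
    · rw [← sum_resample _ j]
      simp [hij]
  calc (#{φ : Fin m → Fin N | ¬ Function.Injective φ} : ℝ) * N
      = N * ∑ φ : Fin m → Fin N, (if ¬ Function.Injective φ then (1 : ℝ) else 0) := by
        rw [card_filter]
        push_cast
        ring
    _ ≤ N * ∑ φ : Fin m → Fin N,
        ∑ q : Fin m × Fin m, if q.1 ≠ q.2 ∧ φ q.1 = φ q.2 then (1 : ℝ) else 0 := by
        gcongr with φ
        exact hpt φ
    _ = ∑ q : Fin m × Fin m, (N : ℝ) * ∑ φ : Fin m → Fin N,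
        (if q.1 ≠ q.2 ∧ φ q.1 = φ q.2 then (1 : ℝ) else 0) := by
        rw [sum_comm, mul_sum]
    _ ≤ ∑ q : Fin m × Fin m, (N : ℝ) ^ m := sum_le_sum fun q _ => hq q
    _ = (m : ℝ) ^ 2 * (N : ℝ) ^ m := by
        simp only [sum_const, card_univ, Fintype.card_prod, Fintype.card_fin, nsmul_eq_mul]
        push_cast
        ring

/-- If `F` has density at least `σ`, a proportion at least `σ / 2` of the samples meets `F` in at least
`σ / 2 * m` indices: the expectation is at least `σ * m`, while the number of indices is at most `m`. -/
lemma card_many_fake {m N : ℕ} (hm : 0 < m) (hN : 0 < N) (σ : ℝ) (hσ : 0 < σ) (F : Finset (Fin N))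
    (hF : σ * N ≤ #F) :
    σ / 2 * (N : ℝ) ^ m ≤ #{φ : Fin m → Fin N | σ / 2 * m ≤ #{i | φ i ∈ F}} := by
  classical
  have hm0 : (0 : ℝ) < m := by exact_mod_cast hm
  have hN0 : (0 : ℝ) < N := by exact_mod_cast hN
  have h1 : ∀ i : Fin m, σ * (N : ℝ) ^ m ≤
      ∑ φ : Fin m → Fin N, (if φ i ∈ F then (1 : ℝ) else 0) := by
    intro i
    have h := sum_resample (fun φ : Fin m → Fin N => if φ i ∈ F then (1 : ℝ) else 0) i
    simp only [Function.update_self] at h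
    have h2 : ∑ a : Fin N, (if a ∈ F then (1 : ℝ) else 0) = #F := by simp
    rw [h2] at h
    simp only [sum_const, card_univ, Fintype.card_fun, Fintype.card_fin, nsmul_eq_mul] at h
    push_cast at h
    refine le_of_mul_le_mul_left ?_ hN0
    rw [← h]
    calc (N : ℝ) * (σ * (N : ℝ) ^ m) = (N : ℝ) ^ m * (σ * N) := by ring
      _ ≤ _ := by gcongr
  have h2 : m * (σ * (N : ℝ) ^ m) ≤ ∑ φ : Fin m → Fin N, (#{i | φ i ∈ F} : ℝ) := by
    calc m * (σ * (N : ℝ) ^ m) = ∑ i : Fin m, σ * (N : ℝ) ^ m := by simp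
      _ ≤ ∑ i : Fin m, ∑ φ : Fin m → Fin N, (if φ i ∈ F then (1 : ℝ) else 0) :=
          sum_le_sum fun i _ => h1 i
      _ = ∑ φ : Fin m → Fin N, (#{i | φ i ∈ F} : ℝ) := by
          rw [sum_comm]
          simp
  have h3 : ∀ φ : Fin m → Fin N, (#{i | φ i ∈ F} : ℝ) ≤
      (if σ / 2 * m ≤ (#{i | φ i ∈ F} : ℝ) then (m : ℝ) else 0) + σ / 2 * m := by
    intro φ
    have h0 : (#{i | φ i ∈ F} : ℝ) ≤ m := by
      have := card_le_univ ({i | φ i ∈ F} : Finset (Fin m))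
      rw [Fintype.card_fin] at this
      exact_mod_cast this
    have h4 : 0 < σ / 2 * m := by positivity
    split_ifs with h <;> linarith
  have h4 := h2.trans (sum_le_sum fun φ _ => h3 φ)
  rw [sum_add_distrib, ← sum_filter, sum_const, sum_const, nsmul_eq_mul, nsmul_eq_mul] at h4
  simp only [card_univ, Fintype.card_fun, Fintype.card_fin] at h4
  push_cast at h4
  refine le_of_mul_le_mul_right ?_ hm0
  linarith

/-! ### Enlarging a matching that misses many vertices -/

/-- The edges of `H` as a relation on block coordinates: `g (k, x)` is the vertex number `x` of block
`k`. -/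
def edgeRel {P : Type*} [DecidableEq P] {N : ℕ} (H : Finset (Fin N × Finset P))
    (g : Fin N × Fin 3 → P) (u : Fin N) (a b c : Fin N × Fin 3) : Prop :=
  (u, {g a, g b, g c}) ∈ H

lemma sampRel_swap12 {P : Type*} [DecidableEq P] {m N : ℕ} {H : Finset (Fin N × Finset P)}
    {g : Fin N × Fin 3 → P} {φ : Fin m → Fin N} {i : Fin m} {a b c : Fin m × Fin 3}
    (h : sampRel (edgeRel H g) φ i a b c) : sampRel (edgeRel H g) φ i b a c := by
  obtain ⟨⟨h1, h2, h3, h4, h5, h6⟩, h⟩ := h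
  refine ⟨⟨h2, h1, h3, h4.symm, h6, h5⟩, ?_⟩
  rw [edgeRel] at h ⊢
  rwa [insert_comm]

lemma sampRel_swap23 {P : Type*} [DecidableEq P] {m N : ℕ} {H : Finset (Fin N × Finset P)}
    {g : Fin N × Fin 3 → P} {φ : Fin m → Fin N} {i : Fin m} {a b c : Fin m × Fin 3}
    (h : sampRel (edgeRel H g) φ i a b c) : sampRel (edgeRel H g) φ i a c b := by
  obtain ⟨⟨h1, h2, h3, h4, h5, h6⟩, h⟩ := h
  refine ⟨⟨h1, h3, h2, h5, h4, h6.symm⟩, ?_⟩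
  rw [edgeRel] at h ⊢
  rwa [pair_comm]

open Classical in
/-- The isomorphism data of a sample: its labelled edge set, and the set of indices sampled from `F`. The
number of types depends on `m` only. -/
noncomputable def sampType {m N : ℕ}
    (E : Fin N → Fin N × Fin 3 → Fin N × Fin 3 → Fin N × Fin 3 → Prop) (F : Finset (Fin N))
    (φ : Fin m → Fin N) :
    Finset (Fin m × (Fin m × Fin 3) × (Fin m × Fin 3) × (Fin m × Fin 3)) × Finset (Fin m) :=
  (univ.filter fun q => sampRel E φ q.1 q.2.1 q.2.2.1 q.2.2.2, univ.filter fun i => φ i ∈ F)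

lemma sampType_rel {m N : ℕ}
    {E : Fin N → Fin N × Fin 3 → Fin N × Fin 3 → Fin N × Fin 3 → Prop} {F : Finset (Fin N)}
    {φ ψ : Fin m → Fin N} (h : sampType E F φ = sampType E F ψ) {i : Fin m}
    {a b c : Fin m × Fin 3} (hφ : sampRel E φ i a b c) : sampRel E ψ i a b c := by
  have h1 := congrArg Prod.fst h
  simp only [sampType] at h1
  have h2 := (Finset.ext_iff.1 h1 (i, a, b, c)).1 (by simpa using hφ)
  simpa using h2

lemma sampType_mem {m N : ℕ}
    {E : Fin N → Fin N × Fin 3 → Fin N × Fin 3 → Fin N × Fin 3 → Prop} {F : Finset (Fin N)}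
    {φ ψ : Fin m → Fin N} (h : sampType E F φ = sampType E F ψ) {i : Fin m}
    (hφ : φ i ∈ F) : ψ i ∈ F := by
  have h1 := congrArg Prod.snd h
  simp only [sampType] at h1
  have h2 := (Finset.ext_iff.1 h1 i).1 (by simpa using hφ)
  simpa using h2

/-- A positive proportion of the samples is injective, has many indices in `F`, and has few short
pairs. -/
lemma card_good_samples {m N : ℕ} (hN : 0 < N) (σ ε : ℝ) (hσ : 0 < σ) (hε : 0 < ε)
    (hm : 90 ≤ ε * m) (hm' : 8 * 3888 ≤ σ * (ε ^ 4 * m)) (hN' : 8 * (m : ℝ) ^ 2 ≤ σ * N)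
    (E : Fin N → Fin N × Fin 3 → Fin N × Fin 3 → Fin N × Fin 3 → Prop) (F : Finset (Fin N))
    (hF : σ * N ≤ #F) :
    σ / 4 * (N : ℝ) ^ m ≤ #{φ : Fin m → Fin N | σ / 2 * m ≤ #{i | φ i ∈ F} ∧
      Function.Injective φ ∧ (#(shortPairs E ε φ) : ℝ) ≤ ε ^ 2 * (m : ℝ) ^ 2} := by
  classical
  have hm0 : 0 < m := by
    rcases Nat.eq_zero_or_pos m with h | h
    · subst h; norm_num at hm
    · exact h
  have hm1 : (0 : ℝ) < m := by exact_mod_cast hm0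
  have hN0 : (0 : ℝ) < N := by exact_mod_cast hN
  have h1 := card_many_fake hm0 hN σ hσ F hF
  have h2 := card_many_short hN E ε hε hm
  have h3 := card_not_injective (m := m) (N := N)
  set X : Finset (Fin m → Fin N) := {φ | σ / 2 * m ≤ #{i | φ i ∈ F} ∧
      Function.Injective φ ∧ (#(shortPairs E ε φ) : ℝ) ≤ ε ^ 2 * (m : ℝ) ^ 2} with hX
  set X1 : Finset (Fin m → Fin N) := {φ | σ / 2 * m ≤ #{i | φ i ∈ F}} with hX1
  set X2 : Finset (Fin m → Fin N) := {φ | ε ^ 2 * (m : ℝ) ^ 2 < #(shortPairs E ε φ)} with hX2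
  set X3 : Finset (Fin m → Fin N) := {φ | ¬ Function.Injective φ} with hX3
  have hsub : X1 ⊆ X ∪ (X2 ∪ X3) := by
    intro φ hφ
    simp only [hX, hX1, hX2, hX3, mem_union, mem_filter, mem_univ, true_and] at hφ ⊢
    by_cases ha : Function.Injective φ
    · by_cases hb : (#(shortPairs E ε φ) : ℝ) ≤ ε ^ 2 * (m : ℝ) ^ 2
      · exact Or.inl ⟨hφ, ha, hb⟩
      · exact Or.inr (Or.inl (not_le.1 hb))
    · exact Or.inr (Or.inr ha)
  have h4 : #X1 ≤ #X + (#X2 + #X3) :=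
    (card_le_card hsub).trans ((card_union_le _ _).trans
      (Nat.add_le_add_left (card_union_le _ _) _))
  have h4' : (#X1 : ℝ) ≤ #X + (#X2 + #X3) := by exact_mod_cast h4
  have h5 : (#X2 : ℝ) ≤ σ / 8 * (N : ℝ) ^ m := by
    refine le_of_mul_le_mul_right (h2.trans ?_) (show (0 : ℝ) < ε ^ 4 * m by positivity)
    have : 8 * 3888 * (N : ℝ) ^ m ≤ σ * (ε ^ 4 * m) * (N : ℝ) ^ m := by gcongr
    linarith
  have h6 : (#X3 : ℝ) ≤ σ / 8 * (N : ℝ) ^ m := by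
    refine le_of_mul_le_mul_right (h3.trans ?_) hN0
    have : 8 * (m : ℝ) ^ 2 * (N : ℝ) ^ m ≤ σ * N * (N : ℝ) ^ m := by gcongr
    linarith
  linarith

/-- If all samples from a box `∏ A i` are good and of the same type, the matching `M` can be enlarged
within the blocks of the box. The common sampled 4-graph has a fractional matching of weight at least
`(1 - 3 * ε) * m`, whose blow-up, rounded down, has more edges than the at most `(1 - σ / 2) * m * t` blocks
of the box that are edges of `M`. -/
lemma augment_box {P : Type*} [DecidableEq P] {m N t : ℕ} (δ σ ε : ℝ)
    (hε : 0 < ε) (hεδ : 6 * ε ≤ δ) (hε1 : ε ≤ 1 / 10) (hεσ : 12 * ε ≤ σ) (hm : 1 ≤ ε * m)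
    (ht : (2 : ℝ) ^ (3 * m) < t * (σ / 4))
    (H : Finset (Fin N × Finset P)) (g : Fin N × Fin 3 → P) (hg : Function.Injective g)
    (hore : ∀ u a b c, edgeRel H g u a b c →
      12 + 9 * δ ≤ normDeg (edgeRel H g) u a + normDeg (edgeRel H g) u b)
    (hmin : ∀ u v, 3 ≤ normDeg (edgeRel H g) u v)
    (M : Finset (Fin N × Finset P)) (hMH : M ⊆ H)
    (hM : ∀ p ∈ M, ∀ r ∈ M, p ≠ r → p.1 ≠ r.1 ∧ Disjoint p.2 r.2)
    (hblock : ∀ p ∈ M, ∀ x ∈ p.2, ∃ y, x = g (p.1, y))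
    (F : Finset (Fin N)) (hF : ∀ u ∈ F, ∀ p ∈ M, p.1 ≠ u)
    (A : Fin m → Finset (Fin N)) (hA : ∀ i, #(A i) = t)
    (y : Finset (Fin m × (Fin m × Fin 3) × (Fin m × Fin 3) × (Fin m × Fin 3)) × Finset (Fin m))
    (hR : ∀ φ, (∀ i, φ i ∈ A i) → sampType (edgeRel H g) F φ = y ∧ σ / 2 * m ≤ #{i | φ i ∈ F} ∧
      Function.Injective φ ∧
      (#(shortPairs (edgeRel H g) ε φ) : ℝ) ≤ ε ^ 2 * (m : ℝ) ^ 2) :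
    ∃ L ⊆ H, (∀ p ∈ L, ∀ r ∈ L, p ≠ r → p.1 ≠ r.1 ∧ Disjoint p.2 r.2) ∧ #M < #L := by
  classical
  have hm0 : 0 < m := by
    rcases Nat.eq_zero_or_pos m with h | h
    · subst h; norm_num at hm
    · exact h
  have hm1 : (0 : ℝ) < m := by exact_mod_cast hm0
  have ht0 : 0 < t := by
    rcases Nat.eq_zero_or_pos t with h | h
    · subst h
      have : (0 : ℝ) < 2 ^ (3 * m) := by positivity
      norm_num at ht
      linarith
    · exact h
  have hne : ∀ i, ∃ x, x ∈ A i := fun i => card_pos.1 (by rw [hA i]; exact ht0)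
  choose φ₀ hφ₀ using hne
  have hN : 0 < N := (φ₀ ⟨0, hm0⟩).pos
  obtain ⟨hy, hfake, hinj, hshort⟩ := hR φ₀ hφ₀
  have hupd : ∀ (φ : Fin m → Fin N), (∀ i, φ i ∈ A i) → ∀ i, ∀ x ∈ A i,
      ∀ k, Function.update φ i x k ∈ A k := by
    intro φ hφ i x hx k
    by_cases hk : k = i
    · subst hk; simpa using hx
    · simpa [hk] using hφ k
  have hdisj : ∀ i j, i ≠ j → Disjoint (A i) (A j) := by
    intro i j hij
    rw [disjoint_left]
    intro x hi hj
    have h := (hR _ (hupd _ (hupd φ₀ hφ₀ i x hi) j x hj)).2.2.1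
    apply hij
    apply h
    simp [hij]
  obtain ⟨f, hf0, hfs, hfrow, hfcol, hfsum⟩ := frac_sample ε δ hε hεδ hε1 hm
    (fun i => sampRel (edgeRel H g) φ₀ i) (fun i a b c => sampRel_swap12)
    (fun i a b c => sampRel_swap23) (fun i a b c h => h.1)
    (fun i v => normDeg (edgeRel H g) (φ₀ i) (φ₀ v.1, v.2))
    (fun i a b c h => hore _ _ _ _ h.2) (fun i v _ => hmin _ _)
    (shortPairs (edgeRel H g) ε φ₀)
    (by
      intro i v hiv hB
      simp only [shortPairs, mem_filter, mem_univ, true_and, not_and, not_lt] at hB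
      exact hB hiv) hshort
  have htr : (0 : ℝ) < t := by exact_mod_cast ht0
  -- multiplicities of the edges in the blow-up: `t * f` rounded down
  let c : Fin m → Finset (Fin m × Fin 3) → ℕ := fun i s => ⌊t * f i s⌋₊
  have hcle : ∀ i s, (c i s : ℝ) ≤ t * f i s := fun i s =>
    Nat.floor_le (mul_nonneg htr.le (hf0 i s))
  have hrow : ∀ i, ∑ s, c i s ≤ t := by
    intro i
    have : ((∑ s, c i s : ℕ) : ℝ) ≤ t := by
      push_cast
      refine (sum_le_sum fun s _ => hcle i s).trans ?_
      rw [← mul_sum]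
      nlinarith [hfrow i]
    exact_mod_cast this
  have hcol : ∀ v, ∑ i, ∑ s with v ∈ s, c i s ≤ t := by
    intro v
    have : ((∑ i, ∑ s with v ∈ s, c i s : ℕ) : ℝ) ≤ t := by
      push_cast
      refine (sum_le_sum fun i _ => sum_le_sum fun s _ => hcle i s).trans ?_
      simp only [← mul_sum]
      nlinarith [hfcol v]
    exact_mod_cast this
  have hH : ∀ i s, c i s ≠ 0 → ∀ u ∈ A i, ∀ b : Fin m × Fin 3 → Fin N,
      (∀ v ∈ s, b v ∈ A v.1) → (u, s.image fun v => g (b v, v.2)) ∈ H := by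
    intro i s hc u hu b hb
    have hfne : f i s ≠ 0 := fun h => hc (by simp [c, h])
    obtain ⟨v₁, v₂, v₃, hτ, rfl⟩ := hfs i s hfne
    obtain ⟨h1, h2, h3, h4, h5, h6⟩ := hτ.1
    have b1 := hb v₁ (by simp)
    have b2 := hb v₂ (by simp)
    have b3 := hb v₃ (by simp)
    have hφ := hupd _ (hupd _ (hupd _ (hupd φ₀ hφ₀ i u hu) v₁.1 _ b1) v₂.1 _ b2) v₃.1 _ b3
    have hty := (hR _ hφ).1
    have hτ' := (sampType_rel (hy.trans hty.symm) hτ).2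
    simp only [edgeRel, Function.update_self, Function.update_of_ne h6, Function.update_of_ne h5,
      Function.update_of_ne h4, Function.update_of_ne h3, Function.update_of_ne h2,
      Function.update_of_ne h1] at hτ'
    simpa [image_insert] using hτ'
  obtain ⟨M', hM'H, hM', hM'card, hM'W⟩ := blowup_matching hN H g hg A hA hdisj c hrow hcol hH
  obtain ⟨L, hLH, hL, hLcard⟩ := replace_matching H g hg M hMH hM hblock (univ.biUnion A) M' hM'H hM'
    (by
      intro p hp
      obtain ⟨⟨i, hi⟩, h⟩ := hM'W p hp
      refine ⟨mem_biUnion.2 ⟨i, mem_univ _, hi⟩, fun x hx => ?_⟩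
      obtain ⟨b, y, ⟨j, hj⟩, rfl⟩ := h x hx
      exact ⟨b, y, mem_biUnion.2 ⟨j, mem_univ _, hj⟩, rfl⟩)
  refine ⟨L, hLH, hL, ?_⟩
  have hreal : #{u ∈ univ.biUnion A | ∃ p ∈ M, p.1 = u} ≤ #{i | φ₀ i ∉ F} * t := by
    have hsub : {u ∈ univ.biUnion A | ∃ p ∈ M, p.1 = u} ⊆
        (univ.filter fun i => φ₀ i ∉ F).biUnion A := by
      intro u hu
      simp only [mem_filter, mem_biUnion, mem_univ, true_and] at hu ⊢
      obtain ⟨⟨i, hi⟩, p, hp, hpu⟩ := hu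
      refine ⟨i, fun hiF => ?_, hi⟩
      have h := sampType_mem (hy.trans (hR _ (hupd φ₀ hφ₀ i u hi)).1.symm) hiF
      rw [Function.update_self] at h
      exact hF u h p hp hpu
    exact (card_le_card hsub).trans (card_biUnion_le_card_mul _ _ _ fun i _ => (hA i).le)
  have hreal' : (#{u ∈ univ.biUnion A | ∃ p ∈ M, p.1 = u} : ℝ) ≤ (m - σ / 2 * m) * t := by
    have h1 : (#{u ∈ univ.biUnion A | ∃ p ∈ M, p.1 = u} : ℝ) ≤ #{i | φ₀ i ∉ F} * t := by
      exact_mod_cast hreal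
    have h2 : (#{i | φ₀ i ∈ F} : ℝ) + #{i | φ₀ i ∉ F} = m := by
      have := card_filter_add_card_filter_not (s := (univ : Finset (Fin m))) (fun i => φ₀ i ∈ F)
      rw [card_univ, Fintype.card_fin] at this
      exact_mod_cast this
    refine h1.trans ?_
    gcongr
    linarith
  have hsum : t * ((1 - 3 * ε) * m) - m * 2 ^ (3 * m) ≤ (#M' : ℝ) := by
    rw [hM'card]
    push_cast
    calc t * ((1 - 3 * ε) * m) - m * 2 ^ (3 * m)
        ≤ t * (∑ i, ∑ s, f i s) - m * 2 ^ (3 * m) := by gcongr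
      _ = ∑ i : Fin m, ∑ s : Finset (Fin m × Fin 3), (t * f i s - 1) := by
          simp only [sum_sub_distrib, ← mul_sum, sum_const, card_univ, Fintype.card_finset,
            Fintype.card_prod, Fintype.card_fin, nsmul_eq_mul]
          push_cast
          rw [mul_comm m 3]
          ring
      _ ≤ ∑ i, ∑ s, (c i s : ℝ) := by
          apply sum_le_sum
          intro i _
          apply sum_le_sum
          intro s _
          have := Nat.lt_floor_add_one (t * f i s)
          simp only [c]
          linarith
  have hfin : (#{u ∈ univ.biUnion A | ∃ p ∈ M, p.1 = u} : ℝ) < #M' := by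
    refine hreal'.trans_lt (lt_of_lt_of_le ?_ hsum)
    have h1 : (2 : ℝ) ^ (3 * m) * m < t * (σ / 4) * m := by gcongr
    have h2 : 12 * ε * (t * m) ≤ σ * (t * m) := by gcongr
    nlinarith
  have hfin' : #{u ∈ univ.biUnion A | ∃ p ∈ M, p.1 = u} < #M' := by exact_mod_cast hfin
  omega

/-- A matching whose edges are blocks and which misses a set `F` of `σ * N` vertices of the singleton
class is not maximum, if the Ore-type condition holds and `N` is large. -/
lemma exists_larger (δ σ : ℝ) (hδ : 0 < δ) (hσ : 0 < σ) : ∃ N₀ : ℕ, ∀ N ≥ N₀,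
    ∀ {P : Type} [DecidableEq P] (H : Finset (Fin N × Finset P)) (g : Fin N × Fin 3 → P),
    Function.Injective g →
    (∀ u a b c, edgeRel H g u a b c →
      12 + 9 * δ ≤ normDeg (edgeRel H g) u a + normDeg (edgeRel H g) u b) →
    (∀ u v, 3 ≤ normDeg (edgeRel H g) u v) →
    ∀ M ⊆ H, (∀ p ∈ M, ∀ r ∈ M, p ≠ r → p.1 ≠ r.1 ∧ Disjoint p.2 r.2) →
    (∀ p ∈ M, ∀ x ∈ p.2, ∃ y, x = g (p.1, y)) →
    ∀ F : Finset (Fin N), (∀ u ∈ F, ∀ p ∈ M, p.1 ≠ u) → σ * N ≤ #F →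
    ∃ L ⊆ H, (∀ p ∈ L, ∀ r ∈ L, p ≠ r → p.1 ≠ r.1 ∧ Disjoint p.2 r.2) ∧ #M < #L := by
  classical
  obtain ⟨ε, hε, hεδ, hε1, hεσ⟩ : ∃ ε : ℝ, 0 < ε ∧ 6 * ε ≤ δ ∧ ε ≤ 1 / 10 ∧ 12 * ε ≤ σ := by
    refine ⟨min (δ / 6) (min (1 / 10) (σ / 12)), by positivity, ?_, ?_, ?_⟩
    · linarith [min_le_left (δ / 6) (min (1 / 10) (σ / 12))]
    · exact (min_le_right _ _).trans (min_le_left _ _)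
    · linarith [(min_le_right (δ / 6) (min (1 / 10) (σ / 12))).trans (min_le_right _ _)]
  -- the constants are chosen in the order `ε`, sample size `m`, box size `t`, then `N`
  obtain ⟨m, hm⟩ := exists_nat_ge (90 / ε + 8 * 3888 / (σ * ε ^ 4))
  have hm1 : 90 ≤ ε * m := by
    have : 90 / ε ≤ m := le_trans (le_add_of_nonneg_right (by positivity)) hm
    rw [div_le_iff₀ hε] at this
    linarith
  have hm2 : 8 * 3888 ≤ σ * (ε ^ 4 * m) := by
    have : 8 * 3888 / (σ * ε ^ 4) ≤ m := le_trans (le_add_of_nonneg_left (by positivity)) hm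
    rw [div_le_iff₀ (by positivity)] at this
    linarith
  obtain ⟨t, ht⟩ := exists_nat_gt ((2 : ℝ) ^ (3 * m) / (σ / 4))
  rw [div_lt_iff₀ (by positivity)] at ht
  let K := Finset (Fin m × (Fin m × Fin 3) × (Fin m × Fin 3) × (Fin m × Fin 3)) × Finset (Fin m)
  have hK : (0 : ℝ) < Fintype.card K := by exact_mod_cast Fintype.card_pos
  obtain ⟨N₁, hN₁⟩ := exists_box m t (σ / 4 / Fintype.card K) (by positivity)
  obtain ⟨N₂, hN₂⟩ := exists_nat_ge (8 * (m : ℝ) ^ 2 / σ)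
  refine ⟨max N₁ (max N₂ 1), fun N hN P _ H g hg hore hmin M hMH hM hblock F hF hFcard => ?_⟩
  have hNN1 : N₁ ≤ N := (le_max_left _ _).trans hN
  have hNN2 : N₂ ≤ N := (le_max_left _ _).trans ((le_max_right _ _).trans hN)
  have hN0 : 0 < N := (le_max_right _ _).trans ((le_max_right _ _).trans hN)
  have hN2 : 8 * (m : ℝ) ^ 2 ≤ σ * N := by
    have h : (N₂ : ℝ) ≤ N := by exact_mod_cast hNN2
    have := hN₂.trans h
    rw [div_le_iff₀ hσ] at this
    linarith
  have hgood := card_good_samples hN0 σ ε hσ hε hm1 hm2 hN2 (edgeRel H g) F hFcard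
  set G : Finset (Fin m → Fin N) := {φ | σ / 2 * m ≤ #{i | φ i ∈ F} ∧
      Function.Injective φ ∧
      (#(shortPairs (edgeRel H g) ε φ) : ℝ) ≤ ε ^ 2 * (m : ℝ) ^ 2} with hG
  -- a type shared by a positive proportion of the good samples
  obtain ⟨y, -, hy⟩ := exists_le_card_fiber_of_nsmul_le_card_of_maps_to
    (s := G) (t := (univ : Finset K)) (f := sampType (edgeRel H g) F)
    (b := σ / 4 / Fintype.card K * (N : ℝ) ^ m) (fun _ _ => mem_univ _) univ_nonempty
    (by
      rw [nsmul_eq_mul, card_univ]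
      refine le_trans (le_of_eq ?_) hgood
      field_simp)
  obtain ⟨A, hA, hbox⟩ := hN₁ N hNN1 _ hy
  refine augment_box δ σ ε hε hεδ hε1 hεσ (by linarith) ht H g hg hore hmin M hMH hM hblock F hF
    A hA y ?_
  intro φ hφ
  have h := hbox φ hφ
  rw [mem_filter, hG, mem_filter] at h
  exact ⟨h.2, h.1.2⟩

/-! ### Cutting the vertex set into blocks along a maximum matching -/

/-- Each edge at `u` and `g v` is counted twice in the link degree, once for each order of its two
remaining vertices. -/
lemma two_mul_deg_le_linkDeg {P : Type*} [DecidableEq P] {N : ℕ} (H : Finset (Fin N × Finset P))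
    (hcard : ∀ p ∈ H, #p.2 = 3) (g : Fin N × Fin 3 ≃ P) (u : Fin N) (v : Fin N × Fin 3) :
    2 * #{p ∈ H | p.1 = u ∧ g v ∈ p.2} ≤ linkDeg univ (edgeRel H g u) v := by
  classical
  have hmaps : Set.MapsTo (fun q : (Fin N × Fin 3) × (Fin N × Fin 3) =>
      ((u, {g v, g q.1, g q.2}) : Fin N × Finset P))
      (({q ∈ univ ×ˢ univ | edgeRel H g u v q.1 q.2} : Finset _) : Set _)
      (({p ∈ H | p.1 = u ∧ g v ∈ p.2} : Finset (Fin N × Finset P)) : Set _) := by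
    intro q hq
    simp only [coe_filter, mem_product, mem_univ, and_self, true_and, Set.mem_ofPred_eq] at hq ⊢
    exact ⟨hq, by simp⟩
  rw [linkDeg, card_eq_sum_card_fiberwise hmaps, mul_comm, ← smul_eq_mul]
  refine card_nsmul_le_sum _ _ _ ?_
  rintro ⟨u', s⟩ hp
  simp only [mem_filter] at hp
  obtain ⟨hpH, rfl, hvs⟩ := hp
  have h3 := hcard _ hpH
  -- the two remaining vertices of the edge, in either order
  have h2 : #(s.erase (g v)) = 2 := by
    rw [card_erase_of_mem hvs]
    simp only at h3
    omega
  obtain ⟨x, y, hxy, hs⟩ := card_eq_two.1 h2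
  have hs' : s = {g v, x, y} := by rw [← insert_erase hvs, hs]
  rw [← card_pair (a := (g.symm x, g.symm y)) (b := (g.symm y, g.symm x))
    (fun h => hxy (g.symm.injective (congrArg Prod.fst h)))]
  apply card_le_card
  intro q hq
  simp only [mem_insert, mem_singleton] at hq
  rcases hq with rfl | rfl
  · exact mem_filter.2 ⟨mem_filter.2 ⟨by simp, by simpa [edgeRel, ← hs'] using hpH⟩, by simp [← hs']⟩
  · have hs'' : s = {g v, y, x} := by rw [hs', pair_comm x y]
    exact mem_filter.2 ⟨mem_filter.2 ⟨by simp, by simpa [edgeRel, ← hs''] using hpH⟩, by simp [← hs'']⟩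

/-- The vertices in `P` can be cut into triples indexed by `Q` so that every edge of the matching `M` is
a block, that is, a vertex of `Q` with its triple. -/
lemma exists_blocks {n : ℕ} (hn : 3 ∣ n) (M : Finset (Fin (n / 3) × Finset (Fin n)))
    (hcard : ∀ p ∈ M, #p.2 = 3)
    (hM : ∀ p ∈ M, ∀ r ∈ M, p ≠ r → p.1 ≠ r.1 ∧ Disjoint p.2 r.2) :
    ∃ g : Fin (n / 3) × Fin 3 ≃ Fin n, ∀ p ∈ M, ∀ x ∈ p.2, ∃ y, x = g (p.1, y) := by
  classical
  rcases Nat.eq_zero_or_pos n with rfl | hpos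
  · refine ⟨Fintype.equivOfCardEq (by simp), fun p _ x _ => x.elim0⟩
  have hcardeq : Fintype.card (Fin (n / 3) × Fin 3) = #(univ : Finset (Fin n)) := by
    simp only [Fintype.card_prod, Fintype.card_fin, card_univ]
    omega
  let f : Fin (n / 3) × Fin 3 → Fin n := fun w =>
    if h : ∃ p ∈ M, p.1 = w.1 then
      h.choose.2.orderEmbOfFin (hcard _ h.choose_spec.1) w.2 else ⟨0, hpos⟩
  have hf : ∀ p (hp : p ∈ M), ∀ y, f (p.1, y) = p.2.orderEmbOfFin (hcard p hp) y := by
    intro p hp y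
    have h : ∃ r ∈ M, r.1 = p.1 := ⟨p, hp, rfl⟩
    have he : h.choose = p := by
      by_contra hne
      exact (hM _ h.choose_spec.1 p hp hne).1 h.choose_spec.2
    simp only [f, dif_pos h]
    congr 1
    simp only [he]
  obtain ⟨g, hg⟩ := exists_equiv_extend_of_card_eq hcardeq
    (s := {w | ∃ p ∈ M, p.1 = w.1}) (f := f) (subset_univ _) (by
      rintro ⟨a, y⟩ hw ⟨b, z⟩ hw' h
      simp only [coe_filter, mem_univ, true_and, Set.mem_ofPred_eq] at hw hw'
      obtain ⟨p, hp, rfl⟩ := hw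
      obtain ⟨r, hr, rfl⟩ := hw'
      rw [hf p hp, hf r hr] at h
      have hpr : p = r := by
        by_contra hne
        refine disjoint_left.1 (hM p hp r hr hne).2 (orderEmbOfFin_mem p.2 (hcard p hp) y) ?_
        rw [h]
        exact orderEmbOfFin_mem _ _ _
      subst hpr
      rw [(p.2.orderEmbOfFin (hcard p hp)).injective h])
  refine ⟨g.trans (Equiv.subtypeUnivEquiv mem_univ), fun p hp x hx => ?_⟩
  have hx' : x ∈ Set.range (p.2.orderEmbOfFin (hcard p hp)) := by
    rw [range_orderEmbOfFin]
    exact hx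
  obtain ⟨y, rfl⟩ := hx'
  refine ⟨y, ?_⟩
  have := hg (p.1, y) (by simpa using ⟨p.2, hp⟩)
  rw [hf p hp] at this
  simp [← this, Equiv.subtypeUnivEquiv]

lemma card_uncovered {n : ℕ} (M : Finset (Fin (n / 3) × Finset (Fin n)))
    (hcard : ∀ p ∈ M, #p.2 = 3)
    (hM : ∀ p ∈ M, ∀ r ∈ M, p ≠ r → p.1 ≠ r.1 ∧ Disjoint p.2 r.2) :
    #{u : Fin (n / 3) | ∀ p ∈ M, p.1 ≠ u} + #M = n / 3 ∧
      #{v : Fin n | ∀ p ∈ M, v ∉ p.2} + 3 * #M = n := by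
  classical
  constructor
  · have h1 : #(M.image Prod.fst) = #M := by
      apply card_image_of_injOn
      intro p hp r hr h
      by_contra hne
      exact (hM p hp r hr hne).1 h
    have h2 : ({u : Fin (n / 3) | ∀ p ∈ M, p.1 ≠ u} : Finset _) = (M.image Prod.fst)ᶜ := by
      ext u
      simp only [mem_filter, mem_univ, true_and, mem_compl, mem_image]
      grind
    rw [h2, ← h1, add_comm, card_add_card_compl, Fintype.card_fin]
  · have h1 : #(M.biUnion Prod.snd) = 3 * #M := by
      rw [card_biUnion fun p hp r hr h => (hM p hp r hr h).2, sum_congr rfl hcard, sum_const,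
        smul_eq_mul, mul_comm]
    have h2 : ({v : Fin n | ∀ p ∈ M, v ∉ p.2} : Finset _) = (M.biUnion Prod.snd)ᶜ := by
      ext v
      simp only [mem_filter, mem_univ, true_and, mem_compl, mem_biUnion]
      grind
    rw [h2, ← h1, add_comm, card_add_card_compl, Fintype.card_fin]

/-- **Almost perfect matching.** For any `0 < σ ≪ δ` there is `n₀`
such that for all `n ≥ n₀` divisible by 3: if `H` is a `(1,3)`-partite 4-graph
with classes `Q = Fin (n/3)`, `P = Fin n` (encoded as pairs `(u, s)`, `|s| = 3`),
every vertex of `Q` is adjacent to every vertex of `P`, and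
`deg({u,v}) + deg({u,v'}) ≥ (2/3 + δ/2)n²` whenever `deg({u,v,v'}) > 0`, then
`H` has a matching covering all but at most `σn` vertices. -/
theorem stmt_16 :
    ∀ δ : ℝ, 0 < δ →
    ∃ σ₀ : ℝ, 0 < σ₀ ∧ ∀ σ : ℝ, 0 < σ → σ < σ₀ →
    ∃ n₀ : ℕ, ∀ n : ℕ, n₀ ≤ n → 3 ∣ n →
    ∀ H : Finset (Fin (n / 3) × Finset (Fin n)),
      (∀ p ∈ H, p.2.card = 3) →
      (∀ u : Fin (n / 3), ∀ v : Fin n, ∃ p ∈ H, p.1 = u ∧ v ∈ p.2) →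
      (∀ u : Fin (n / 3), ∀ v v' : Fin n, v ≠ v' →
        0 < (H.filter (fun p => p.1 = u ∧ v ∈ p.2 ∧ v' ∈ p.2)).card →
        (((H.filter (fun p => p.1 = u ∧ v ∈ p.2)).card
          + (H.filter (fun p => p.1 = u ∧ v' ∈ p.2)).card : ℝ)
            ≥ (2 / 3 + δ / 2) * (n : ℝ) ^ 2)) →
      ∃ M ⊆ H,
        (∀ p ∈ M, ∀ r ∈ M, p ≠ r → p.1 ≠ r.1 ∧ Disjoint p.2 r.2) ∧
        (((Finset.univ.filter (fun u : Fin (n / 3) => ∀ p ∈ M, p.1 ≠ u)).card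
          + (Finset.univ.filter (fun v : Fin n => ∀ p ∈ M, v ∉ p.2)).card : ℝ)
            ≤ σ * n) := by
  intro δ hδ
  refine ⟨1, one_pos, fun σ hσ _ => ?_⟩
  obtain ⟨N₀, hN₀⟩ := exists_larger δ (3 * σ / 4) hδ (by positivity)
  refine ⟨3 * N₀ + 3, fun n hn hdvd H hcard hadj hore => ?_⟩
  classical
  obtain ⟨M, hMmem, hMmax⟩ := exists_max_image
    {M ∈ H.powerset | ∀ p ∈ M, ∀ r ∈ M, p ≠ r → p.1 ≠ r.1 ∧ Disjoint p.2 r.2} card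
    ⟨∅, by simp⟩
  simp only [mem_filter, mem_powerset] at hMmem hMmax
  obtain ⟨hMH, hM⟩ := hMmem
  refine ⟨M, hMH, hM, ?_⟩
  by_contra hlarge
  rw [not_le] at hlarge
  have hMcard : ∀ p ∈ M, #p.2 = 3 := fun p hp => hcard p (hMH hp)
  obtain ⟨g, hg⟩ := exists_blocks hdvd M hMcard hM
  obtain ⟨hQ, hP⟩ := card_uncovered M hMcard hM
  have hN : 3 * (n / 3) = n := Nat.mul_div_cancel' hdvd
  have hn3 : (n : ℝ) = 3 * (n / 3 : ℕ) := by exact_mod_cast hN.symm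
  have hNpos : (0 : ℝ) < (n / 3 : ℕ) := by
    have : 0 < n / 3 := by omega
    exact_mod_cast this
  have hdeg : ∀ u v, 2 * (#{p ∈ H | p.1 = u ∧ g v ∈ p.2} : ℝ) ≤
      normDeg (edgeRel H g) u v * ((n / 3 : ℕ) : ℝ) ^ 2 := by
    intro u v
    rw [normDeg, div_mul_cancel₀ _ (by positivity)]
    exact_mod_cast two_mul_deg_le_linkDeg H hcard g u v
  have hOre : ∀ u a b c, edgeRel H g u a b c →
      12 + 9 * δ ≤ normDeg (edgeRel H g) u a + normDeg (edgeRel H g) u b := by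
    intro u a b c h
    have hab : g a ≠ g b := by
      intro hab
      have h3 := hcard _ h
      have : #({g a, g b, g c} : Finset (Fin n)) ≤ 2 := by
        rw [hab, insert_idem]
        exact card_le_two
      simp only at h3
      omega
    have h1 := hore u (g a) (g b) hab (card_pos.2 ⟨(u, {g a, g b, g c}), by
      simpa [edgeRel] using h⟩)
    have h2 := hdeg u a
    have h3 := hdeg u b
    rw [hn3] at h1
    refine le_of_mul_le_mul_right ?_ (show (0 : ℝ) < ((n / 3 : ℕ) : ℝ) ^ 2 by positivity)
    nlinarith
  -- each `v` has a neighbour, whose normalised degree is at most `9`, while the sum is at least `12`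
  have hmin : ∀ u v, 3 ≤ normDeg (edgeRel H g) u v := by
    intro u v
    obtain ⟨p, hp, rfl, hv⟩ := hadj u (g v)
    have h2 : #(p.2.erase (g v)) = 2 := by
      rw [card_erase_of_mem hv, hcard p hp]
    obtain ⟨x, y, hxy, hs⟩ := card_eq_two.1 h2
    have h := hOre p.1 v (g.symm x) (g.symm y) (by
      simp only [edgeRel, Equiv.apply_symm_apply]
      rw [← hs, insert_erase hv]
      exact hp)
    have := (normDeg_bounds (edgeRel H g) p.1 (g.symm x)).2
    linarith
  have hF : 3 * σ / 4 * ((n / 3 : ℕ) : ℝ) ≤ #{u : Fin (n / 3) | ∀ p ∈ M, p.1 ≠ u} := by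
    have h1 : (#{u : Fin (n / 3) | ∀ p ∈ M, p.1 ≠ u} : ℝ) + #M = (n / 3 : ℕ) := by
      exact_mod_cast hQ
    have h2 : (#{v : Fin n | ∀ p ∈ M, v ∉ p.2} : ℝ) + 3 * #M = n := by exact_mod_cast hP
    rw [hn3] at h2 hlarge
    linarith
  obtain ⟨L, hLH, hL, hlt⟩ := hN₀ (n / 3) (by omega) H g g.injective hOre hmin M hMH hM hg
    {u | ∀ p ∈ M, p.1 ≠ u} (fun u hu => by simpa using hu) hF
  exact absurd (hMmax L ⟨hLH, hL⟩) (not_le.2 hlt)
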